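/- arXiv:math/0604376 — 7 statements merged into one kernel-verified Lean document; each statement's English description precedes it below -/
import Mathlib

section
/- Every Carmichael number less than 10^18 has at most 11 distinct prime factors. -/
/-- A Carmichael number: a composite natural number `N` such that
`b ^ (N - 1) ≡ 1 [MOD N]` for every `b` coprime to `N`. -/
def IsCarmichael (N : ℕ) : Prop :=
  1 < N ∧ ¬ N.Prime ∧ ∀ b : ℕ, Nat.Coprime b N → b ^ (N - 1) ≡ 1 [MOD N]

theorem cmBeq (a b : ℕ) : (Nat.beq a b = true) = (a = b) :=
  propext ⟨Nat.eq_of_beq_eq_true, fun h => by subst h; exact Nat.beq_refl a⟩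

/-- Modular power with fuel. -/
def cmPow : ℕ → ℕ → ℕ → ℕ → ℕ
  | 0, _, _, _ => 1
  | f + 1, b, e, m =>
    bif Nat.beq (e % 2) 1 then b * cmPow f (b * b % m) (e / 2) m % m
    else cmPow f (b * b % m) (e / 2) m

theorem cmPow_spec (f : ℕ) : ∀ b e m : ℕ, e < 2 ^ f → cmPow f b e m ≡ b ^ e [MOD m] := by
  induction f with
  | zero =>
    intro b e m h
    have : e = 0 := by simpa using h
    subst this
    simp [cmPow, Nat.ModEq]
  | succ f ih =>
    intro b e m h
    have h2 : e / 2 < 2 ^ f := by rw [pow_succ] at h; omega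
    have h3 := ih (b * b % m) (e / 2) m h2
    have h4 : (b * b % m) ^ (e / 2) ≡ (b * b) ^ (e / 2) [MOD m] :=
      (Nat.mod_modEq (b * b) m).pow _
    have h5 := h3.trans h4
    have h6 : (b * b) ^ (e / 2) = b ^ (2 * (e / 2)) := by rw [pow_mul, pow_two]
    rw [h6] at h5
    unfold cmPow
    by_cases he : e % 2 = 1
    · have : Nat.beq (e % 2) 1 = true := by simp [he]
      rw [this, cond_true]
      refine (Nat.mod_modEq _ _).trans ?_
      have h7 := h5.mul_left b
      rwa [← pow_succ', show 2 * (e / 2) + 1 = e by omega] at h7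
    · have : Nat.beq (e % 2) 1 = false := by
        rw [Bool.eq_false_iff]; intro h; exact he (Nat.eq_of_beq_eq_true h)
      rw [this, cond_false]
      rwa [show 2 * (e / 2) = e by omega] at h5

/-- Modular inverse with fuel (untrusted). -/
def cmInv : ℕ → ℕ → ℕ → ℕ
  | 0, _, _ => 1
  | f + 1, a, m => bif Nat.ble a 1 then 1 else (1 + m * (a - cmInv f (m % a) a)) / a

def cmLeafN (P L r : ℕ) : Bool :=
  Nat.beq (P * r % L) 1 && (Nat.ble (r + 1) L && (Nat.ble (10 ^ 18) (P * r) ||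
    (Nat.beq (P * r % 2) 1 && !(Nat.beq (cmPow 64 2 (P * r - 1) (P * r) % (P * r)) 1))))

def cmSearch : ℕ → ℕ → ℕ → ℕ → ℕ → Bool
  | 0, _, _, _, _ => false
  | f + 1, P, L, k, c =>
    bif Nat.ble (10 ^ 18) (P * c ^ k) then true
    else bif Nat.ble (10 ^ 18) (L * P) then cmLeafN P L (cmInv 64 (P % L) L)
    else
      (bif (Nat.beq (Nat.gcd c 200560490130) 1 || Nat.beq (Nat.gcd c 200560490130) c) &&
          (Nat.beq (Nat.gcd c L) 1 && Nat.beq (Nat.gcd (c - 1) P) 1)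
        then cmSearch f (P * c) (Nat.lcm L (c - 1)) (k - 1) (c + 1) else true) &&
      cmSearch f P L k (c + 1)

set_option maxRecDepth 100000 in
theorem cmSearch_true : cmSearch 2000 1 1 12 2 = true := by
  decide +kernel

theorem cmLeafN_sound {N P L r : ℕ} (hN : 1 < N) (hB : N < 10 ^ 18)
    (h2 : Nat.Coprime 2 N → 2 ^ (N - 1) ≡ 1 [MOD N])
    (hP : P ∣ N) (hL : L ∣ N - 1) (hPL : 10 ^ 18 ≤ L * P)
    (h : cmLeafN P L r = true) : False := by
  simp only [cmLeafN, Bool.and_eq_true, Bool.or_eq_true, cmBeq, Nat.ble_eq,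
    Bool.not_eq_true'] at h
  obtain ⟨h1, hr, h3⟩ := h
  obtain ⟨R, rfl⟩ := hP
  have hRL : R < L := by
    by_contra hc
    push Not at hc
    have := Nat.mul_le_mul_right P hc
    nlinarith
  have hL1 : 1 < L := by
    rcases Nat.lt_or_ge 1 L with h | h
    · exact h
    · interval_cases L
      · omega
      · simp [Nat.mod_one] at h1
  have e1 : P * r ≡ 1 [MOD L] := by
    rw [Nat.ModEq, h1, Nat.mod_eq_of_lt hL1]
  have e2 : 1 ≡ P * R [MOD L] := (Nat.modEq_iff_dvd' hN.le).2 hL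
  have cop : Nat.gcd L P = 1 := by
    have hd : Nat.gcd L P ∣ 1 := by
      have := (e1.of_dvd (Nat.gcd_dvd_left L P))
      exact (this.dvd_iff dvd_rfl).1 ((Nat.gcd_dvd_right L P).mul_right r)
    exact Nat.dvd_one.1 hd
  have e3 : r ≡ R [MOD L] := Nat.ModEq.cancel_left_of_coprime cop (e1.trans e2)
  have e4 : r = R := Nat.ModEq.eq_of_lt_of_lt e3 (by omega) hRL
  subst e4
  rcases h3 with h3 | ⟨h3, h4⟩
  · omega
  · have hc : Nat.Coprime 2 (P * r) := (Nat.coprime_two_left).2 (Nat.odd_iff.2 h3)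
    have h5 := h2 hc
    have h6 := (cmPow_spec 64 2 (P * r - 1) (P * r) (by norm_num at hB ⊢; omega)).trans h5
    rw [Nat.ModEq, Nat.mod_eq_of_lt hN] at h6
    rw [← Bool.not_eq_true, cmBeq] at h4
    exact h4 h6

theorem cmSearch_sound {N : ℕ} (hN : 1 < N) (hB : N < 10 ^ 18)
    (h2 : Nat.Coprime 2 N → 2 ^ (N - 1) ≡ 1 [MOD N])
    (hK : ∀ p, p.Prime → p ∣ N → p - 1 ∣ N - 1) (f : ℕ) :
    ∀ P L k c : ℕ, 0 < c → P = ∏ p ∈ N.primeFactors with p < c, p → L ∣ N - 1 →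
      k ≤ (N.primeFactors.filter (fun p => ¬ p < c)).card → cmSearch f P L k c = true → False := by
  have hNN : Nat.Coprime N (N - 1) := by
    have := Nat.coprime_self_add_right (m := N - 1) (n := 1)
    rw [show N - 1 + 1 = N by omega] at this
    exact (this.2 (Nat.coprime_one_right _)).symm
  induction f with
  | zero => intro P L k c _ _ _ _ h; simp [cmSearch] at h
  | succ f ih =>
    intro P L k c hc0 hP hL hk h
    have hprod := Finset.prod_filter_mul_prod_filter_not N.primeFactors (fun p => p < c) (fun p => p)
    have hdvd := Nat.prod_primeFactors_dvd N
    have hPN : P ∣ N := by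
      refine dvd_trans ?_ hdvd
      rw [← hprod, hP]
      exact dvd_mul_right _ _
    unfold cmSearch at h
    cases hb : Nat.ble (10 ^ 18) (P * c ^ k) with
    | true =>
      have hb' := Nat.le_of_ble_eq_true hb
      rcases Nat.eq_zero_or_pos c with hc | hc
      · omega
      have h1 : c ^ (N.primeFactors.filter (fun p => ¬ p < c)).card ≤
          ∏ p ∈ N.primeFactors with ¬ p < c, p := by
        apply Finset.pow_card_le_prod
        intro x hx
        have := (Finset.mem_filter.1 hx).2
        omega
      have h3 := Nat.pow_le_pow_right hc hk
      have h4 := Nat.mul_le_mul_left P (h3.trans h1)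
      have h5 := Nat.le_of_dvd (by omega) hdvd
      rw [← hprod, ← hP] at h5
      omega
    | false =>
    rw [hb, cond_false] at h
    cases hb2 : Nat.ble (10 ^ 18) (L * P) with
    | true =>
      rw [hb2, cond_true] at h
      exact cmLeafN_sound hN hB h2 hPN hL (Nat.le_of_ble_eq_true hb2) h
    | false =>
    rw [hb2, cond_false, Bool.and_eq_true] at h
    obtain ⟨ha, hbb⟩ := h
    by_cases hc : c ∈ N.primeFactors
    · have hcp := Nat.prime_of_mem_primeFactors hc
      have hcN := Nat.dvd_of_mem_primeFactors hc
      have hcK := hK c hcp hcN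
      have g1 : Nat.gcd c L = 1 := Nat.Coprime.of_dvd hcN hL hNN
      have g2 : Nat.gcd (c - 1) P = 1 := Nat.Coprime.of_dvd hcK hPN hNN.symm
      have g3 := (Nat.dvd_prime hcp).1 (Nat.gcd_dvd_left c 200560490130)
      have hcond : ((Nat.beq (Nat.gcd c 200560490130) 1 || Nat.beq (Nat.gcd c 200560490130) c) &&
          (Nat.beq (Nat.gcd c L) 1 && Nat.beq (Nat.gcd (c - 1) P) 1)) = true := by
        simp only [Bool.and_eq_true, Bool.or_eq_true, cmBeq]
        exact ⟨g3, g1, g2⟩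
      rw [hcond, cond_true] at ha
      have i1 : N.primeFactors.filter (fun p => p < c + 1) =
          insert c (N.primeFactors.filter (fun p => p < c)) := by
        ext x; simp only [Finset.mem_filter, Finset.mem_insert]
        constructor
        · rintro ⟨h, h'⟩
          rcases Nat.lt_succ_iff_lt_or_eq.1 h' with h' | h'
          · exact Or.inr ⟨h, h'⟩
          · exact Or.inl h'
        · rintro (h | ⟨h, h'⟩)
          · subst h; exact ⟨hc, by omega⟩
          · exact ⟨h, by omega⟩
      have i2 : N.primeFactors.filter (fun p => ¬ p < c + 1) =
          (N.primeFactors.filter (fun p => ¬ p < c)).erase c := by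
        ext x; simp only [Finset.mem_filter, Finset.mem_erase]
        constructor
        · rintro ⟨h, h'⟩
          exact ⟨by omega, h, by omega⟩
        · rintro ⟨h, h', h''⟩
          exact ⟨h', by omega⟩
      refine ih _ _ _ _ (by omega) ?_ (Nat.lcm_dvd hL hcK) ?_ ha
      · rw [i1, Finset.prod_insert (by simp), hP, mul_comm]
      · rw [i2, Finset.card_erase_of_mem (by simp [Finset.mem_filter, -Nat.mem_primeFactors, hc])]
        omega
    · have i1 : N.primeFactors.filter (fun p => p < c + 1) =
          N.primeFactors.filter (fun p => p < c) := by
        apply Finset.filter_congr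
        intro x hx
        have : x ≠ c := fun h => hc (h ▸ hx)
        omega
      have i2 : N.primeFactors.filter (fun p => ¬ p < c + 1) =
          N.primeFactors.filter (fun p => ¬ p < c) := by
        apply Finset.filter_congr
        intro x hx
        have : x ≠ c := fun h => hc (h ▸ hx)
        omega
      refine ih _ _ _ _ (by omega) ?_ hL ?_ hbb
      · rw [i1, hP]
      · rw [i2]; exact hk

theorem korselt_dvd {N : ℕ} (h : IsCarmichael N) (p : ℕ) (hp : p.Prime) (hpN : p ∣ N) :
    p - 1 ∣ N - 1 := by
  obtain ⟨h1, -, h3⟩ := h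
  have : Fact p.Prime := ⟨hp⟩
  have : NeZero N := ⟨by omega⟩
  obtain ⟨g, hg⟩ := IsCyclic.exists_generator (α := (ZMod p)ˣ)
  obtain ⟨u, hu⟩ := ZMod.unitsMap_surjective hpN g
  have hcop := ZMod.val_coe_unit_coprime u
  have h4 := h3 _ hcop
  have h5 : u ^ (N - 1) = 1 := by
    ext
    have := (ZMod.natCast_eq_natCast_iff _ _ _).2 h4
    simpa using this
  have h6 : g ^ (N - 1) = 1 := by rw [← hu, ← map_pow, h5, map_one]
  have h7 := orderOf_dvd_of_pow_eq_one h6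
  rwa [orderOf_eq_card_of_forall_mem_zpowers hg, Nat.card_eq_fintype_card,
    ZMod.card_units] at h7

theorem carmichael_lt_1e18_omega_le_eleven :
    ∀ N : ℕ, IsCarmichael N → N < 10 ^ 18 → N.primeFactors.card ≤ 11 := by
  intro N h hB
  by_contra hc
  push Not at hc
  refine cmSearch_sound h.1 hB (fun h2 => h.2.2 2 h2) (korselt_dvd h) 2000 1 1 12 2 (by norm_num) ?_ (one_dvd _)
    ?_ cmSearch_true
  · rw [Finset.filter_false_of_mem]
    · simp
    · intro x hx
      have := (Nat.prime_of_mem_primeFactors hx).two_le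
      omega
  · rw [Finset.filter_true_of_mem]
    · omega
    · intro x hx
      have := (Nat.prime_of_mem_primeFactors hx).two_le
      omega
end

section
/- 825265 = 5 · 7 · 17 · 19 · 73 is a Carmichael number with exactly 5 distinct prime factors, and it is the smallest such: every Carmichael number with exactly 5 distinct prime factors is at least 825265. -/
/-- `true` when no admissible choice of `k` further primes from the list gives a
Carmichael number below the bound. -/
def srch : List ℕ → ℕ → ℕ → List ℕ → Bool
  | _, 0, P, ch => !(ch.all fun q => Nat.beq ((P - 1) % (q - 1)) 0)
  | [], _ + 1, _, _ => true
  | p :: L, k + 1, P, ch =>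
    Nat.ble 825265 (P * p ^ (k + 1)) ||
      (srch L (k + 1) P ch &&
        ((ch.any fun q => Nat.beq (p % q) 1) || srch L k (P * p) (p :: ch)))

def cands : List ℕ :=
  (List.range 880).filter fun p => Nat.ble 3 p &&
    [2, 3, 5, 7, 11, 13, 17, 19, 23, 29].all fun d => Nat.beq p d || !(Nat.beq (p % d) 0)

theorem srch_ok : srch cands 5 1 [] = true := by decide +kernel

theorem cands_sorted : cands.Pairwise (· < ·) :=
  List.Pairwise.filter _ (List.pairwise_lt_range)

theorem mem_cands {p : ℕ} (hp : p.Prime) (h3 : 3 ≤ p) (h : p < 880) : p ∈ cands := by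
  have key : ∀ d, 2 ≤ d → (Nat.beq p d || !(Nat.beq (p % d) 0)) = true := by
    intro d hd
    by_cases h0 : p % d = 0
    · have h1 := (Nat.dvd_prime hp).1 (Nat.dvd_of_mod_eq_zero h0)
      have : p = d := by omega
      simp [this]
    · have : Nat.beq (p % d) 0 = false := by
        rw [← Bool.not_eq_true]
        exact fun h => h0 (Nat.eq_of_beq_eq_true h)
      simp [this]
  unfold cands
  rw [List.mem_filter]
  refine ⟨List.mem_range.2 h, ?_⟩
  rw [Bool.and_eq_true, List.all_eq_true]
  refine ⟨by simpa using h3, ?_⟩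
  intro d hd
  apply key
  simp at hd
  omega

theorem srch_sound (L : List ℕ) : ∀ (k P : ℕ) (ch l : List ℕ), L.Pairwise (· < ·) →
    srch L k P ch = true → l.Sublist L → l.length = k → P * l.prod < 825265 →
    (∀ q ∈ l ++ ch, (q - 1) ∣ (P * l.prod - 1)) →
    (∀ p ∈ l ++ ch, ∀ q ∈ l ++ ch, p % q ≠ 1) → False := by
  induction L with
  | nil =>
    intro k P ch l _ hs hl hk hlt hd _
    have : l = [] := by simpa using hl
    subst this
    simp at hk; subst hk
    simp [srch] at hs
    obtain ⟨q, hq, h⟩ := hs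
    exact h (Nat.mod_eq_zero_of_dvd (by simpa using hd q (by simpa using hq)))
  | cons a L ih =>
    intro k P ch l hL hs hl hk hlt hd hm
    cases k with
    | zero =>
      have : l = [] := by simpa using hk
      subst this
      simp [srch] at hs
      obtain ⟨q, hq, h⟩ := hs
      exact h (Nat.mod_eq_zero_of_dvd (by simpa using hd q (by simpa using hq)))
    | succ k =>
      have hge : a ^ (k + 1) ≤ l.prod := by
        rw [← hk]
        apply List.pow_card_le_prod
        intro x hx
        have := hl.subset hx
        rw [List.mem_cons] at this
        rcases this with h | h
        · exact h.ge
        · exact ((List.pairwise_cons.1 hL).1 x h).le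
      have hP : P * a ^ (k + 1) < 825265 := lt_of_le_of_lt (Nat.mul_le_mul_left P hge) hlt
      rw [srch, Bool.or_eq_true, Bool.and_eq_true, Bool.or_eq_true] at hs
      rcases hs with hs | ⟨hs1, hs2⟩
      · have := Nat.le_of_ble_eq_true hs
        omega
      · have hL' := (List.pairwise_cons.1 hL).2
        cases hl with
        | cons _ h => exact ih _ P ch l hL' hs1 h hk hlt hd hm
        | cons_cons _ h =>
          rename_i l'
          rcases hs2 with hs2 | hs2
          · simp only [List.any_eq_true] at hs2
            obtain ⟨q, hq, h'⟩ := hs2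
            exact hm a (by simp) q (by simp [hq]) (Nat.eq_of_beq_eq_true h')
          · have e : P * a * l'.prod = P * (a :: l').prod := by
              rw [List.prod_cons, mul_assoc]
            refine ih k (P * a) (a :: ch) l' hL' hs2 h (by simpa using hk) (by rw [e]; exact hlt)
              ?_ ?_
            · intro q hq
              rw [e]
              apply hd
              simp at hq ⊢; tauto
            · intro p hp q hq
              apply hm
              · simp at hp ⊢; tauto
              · simp at hq ⊢; tauto

open ArithmeticFunction in
theorem carm_iff {N : ℕ} (hN : 1 < N) (h : ∀ b : ℕ, Nat.Coprime b N → b ^ (N - 1) ≡ 1 [MOD N]) :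
    Monoid.exponent (ZMod N)ˣ ∣ N - 1 := by
  apply Monoid.exponent_dvd_of_forall_pow_eq_one
  intro u
  have : NeZero N := ⟨by omega⟩
  have h1 := h (u : ZMod N).val (ZMod.val_coe_unit_coprime u)
  have h2 := (ZMod.natCast_eq_natCast_iff _ _ _).2 h1
  ext
  simpa using h2

theorem exp_prime {p : ℕ} (hp : p.Prime) : Monoid.exponent (ZMod p)ˣ = p - 1 := by
  have : Fact p.Prime := ⟨hp⟩
  rw [IsCyclic.exponent_eq_card, Nat.card_eq_fintype_card, ZMod.card_units]

theorem exp_dvd {a b : ℕ} (hb : b ≠ 0) (h : a ∣ b) :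
    Monoid.exponent (ZMod a)ˣ ∣ Monoid.exponent (ZMod b)ˣ := by
  have ha : a ≠ 0 := fun h0 => hb (by subst h0; simpa using h)
  rw [← ArithmeticFunction.carmichael_eq_exponent ha,
    ← ArithmeticFunction.carmichael_eq_exponent hb]
  exact ArithmeticFunction.carmichael_dvd h

theorem carm_min (N : ℕ) (hN : IsCarmichael N) (h5 : N.primeFactors.card = 5) : 825265 ≤ N := by
  by_contra hlt
  push Not at hlt
  obtain ⟨h1, -, hc⟩ := hN
  have h0 : N ≠ 0 := by omega
  have hexp := carm_iff h1 hc
  have hd : ∀ p, p.Prime → p ∣ N → (p - 1) ∣ (N - 1) := by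
    intro p hp hpN
    rw [← exp_prime hp]
    exact (exp_dvd h0 hpN).trans hexp
  have hcop : ∀ q, q.Prime → q ∣ N → ¬ q ∣ N - 1 := by
    intro q hq h h'
    have : q ∣ 1 := by
      have := Nat.dvd_sub h h'
      rwa [show N - (N - 1) = 1 by omega] at this
    exact hq.one_lt.ne' (Nat.dvd_one.1 this)
  have hm : ∀ p q, p.Prime → q.Prime → p ∣ N → q ∣ N → p % q ≠ 1 := by
    intro p q hp hq hpN hqN h
    apply hcop q hq hqN
    refine dvd_trans ?_ (hd p hp hpN)
    exact (Nat.modEq_iff_dvd' hp.one_lt.le).1 (by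
      rw [Nat.ModEq, h, Nat.mod_eq_of_lt hq.one_lt])
  have hodd : ¬ 2 ∣ N := by
    intro h2
    have : ∃ p ∈ N.primeFactors, p ≠ 2 :=
      Finset.exists_mem_ne (by omega) 2
    obtain ⟨p, hp, hp2⟩ := this
    have hpp := Nat.prime_of_mem_primeFactors hp
    have := hpp.eq_two_or_odd
    exact hm p 2 hpp Nat.prime_two (Nat.dvd_of_mem_primeFactors hp) h2 (by omega)
  have hsq : Squarefree N := by
    rw [Nat.squarefree_iff_prime_squarefree]
    intro p hp hpp
    apply hcop p hp ((dvd_mul_right p p).trans hpp)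
    refine dvd_trans ?_ hexp
    refine dvd_trans ?_ (exp_dvd h0 hpp)
    have hp2 : p ≠ 2 := by
      rintro rfl
      exact hodd ((dvd_mul_right 2 2).trans hpp)
    rw [← ArithmeticFunction.carmichael_eq_exponent (mul_ne_zero hp.ne_zero hp.ne_zero), ← pow_two,
      ArithmeticFunction.carmichael_pow_of_prime_ne_two 2 hp hp2, Nat.totient_prime_pow hp (by norm_num)]
    simp
  have hnd := (Nat.squarefree_iff_nodup_primeFactorsList h0).1 hsq
  have hlen : N.primeFactorsList.length = 5 := by
    rw [← h5, Nat.primeFactors, List.toFinset_card_of_nodup hnd]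
  have hprod := Nat.prod_primeFactorsList h0
  have hsort : N.primeFactorsList.Pairwise (· < ·) := by
    have := (Nat.primeFactorsList_sorted N)
    exact (List.SortedLE.sortedLT_of_nodup this hnd).pairwise
  have hmem : ∀ p ∈ N.primeFactorsList, p.Prime ∧ p ∣ N := fun p hp =>
    ⟨Nat.prime_of_mem_primeFactorsList hp, Nat.dvd_of_mem_primeFactorsList hp⟩
  have hbig : ∀ p ∈ N.primeFactorsList, 3 ≤ p ∧ p % 2 = 1 := by
    intro p hp
    obtain ⟨ha, hb⟩ := hmem p hp
    have hp2 : p ≠ 2 := by rintro rfl; exact hodd hb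
    have := ha.two_le
    have := ha.eq_two_or_odd
    omega
  have hsmall : ∀ p ∈ N.primeFactorsList, p < 880 := by
    generalize N.primeFactorsList = l at hlen hprod hsort hbig
    match l, hlen with
    | [a, b, c, d, e], _ =>
      simp at hsort hbig hprod
      have hb : 5 ≤ b := by omega
      have hc : 7 ≤ c := by omega
      have hd : 9 ≤ d := by omega
      have he : e < 880 := by
        by_contra he
        push Not at he
        have : 3 * (5 * (7 * (9 * 880))) ≤ a * (b * (c * (d * e))) := by
          gcongr; omega
        omega
      intro p hp
      simp at hp
      omega
  have hsub : N.primeFactorsList.Sublist cands := by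
    apply List.sublist_of_subperm_of_pairwise (r := (· < ·)) _ hsort cands_sorted
    apply List.subperm_of_subset hnd
    intro p hp
    exact mem_cands (hmem p hp).1 (hbig p hp).1 (hsmall p hp)
  refine srch_sound cands 5 1 [] _ cands_sorted srch_ok hsub hlen (by rw [hprod]; omega) ?_ ?_
  · intro q hq
    rw [hprod, one_mul]
    rw [List.append_nil] at hq
    exact hd q (hmem q hq).1 (hmem q hq).2
  · intro p hp q hq
    rw [List.append_nil] at hp hq
    exact hm p q (hmem p hp).1 (hmem q hq).1 (hmem p hp).2 (hmem q hq).2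

theorem carm_key {b p n : ℕ} (hp : p.Prime) (hb : Nat.Coprime b 825265) (hpN : p ∣ 825265)
    (hn : (p - 1) ∣ n) : b ^ n ≡ 1 [MOD p] := by
  obtain ⟨k, hk⟩ := hn
  have h1 := Nat.ModEq.pow_totient (Nat.Coprime.coprime_dvd_right hpN hb)
  rw [Nat.totient_prime hp] at h1
  rw [hk, pow_mul]
  simpa using h1.pow k

theorem carm_crt {x : ℕ} (k1 : x ≡ 1 [MOD 5]) (k2 : x ≡ 1 [MOD 7]) (k3 : x ≡ 1 [MOD 17])
    (k4 : x ≡ 1 [MOD 19]) (k5 : x ≡ 1 [MOD 73]) : x ≡ 1 [MOD 825265] := by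
  have a1 := (Nat.modEq_and_modEq_iff_modEq_mul (by norm_num)).1 ⟨k1, k2⟩
  have a2 := (Nat.modEq_and_modEq_iff_modEq_mul (by norm_num)).1 ⟨a1, k3⟩
  have a3 := (Nat.modEq_and_modEq_iff_modEq_mul (by norm_num)).1 ⟨a2, k4⟩
  have a4 := (Nat.modEq_and_modEq_iff_modEq_mul (by norm_num)).1 ⟨a3, k5⟩
  norm_num at a4
  exact a4

theorem carm_val_aux (n b : ℕ) (hn : n = 825264) (hb : Nat.Coprime b 825265) :
    b ^ n ≡ 1 [MOD 825265] :=
  carm_crt (carm_key (by norm_num) hb (by norm_num) (by rw [hn]; norm_num))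
    (carm_key (by norm_num) hb (by norm_num) (by rw [hn]; norm_num))
    (carm_key (by norm_num) hb (by norm_num) (by rw [hn]; norm_num))
    (carm_key (by norm_num) hb (by norm_num) (by rw [hn]; norm_num))
    (carm_key (by norm_num) hb (by norm_num) (by rw [hn]; norm_num))

theorem carm_val : IsCarmichael 825265 :=
  ⟨by norm_num, by norm_num, fun b hb => carm_val_aux (825265 - 1) b (by norm_num) hb⟩

theorem carmichael_smallest_with_5_prime_factors :
    (825265 : ℕ) = 5 * 7 * 17 * 19 * 73 ∧ IsCarmichael 825265 ∧ (Nat.primeFactors 825265).card = 5 ∧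
      ∀ N : ℕ, IsCarmichael N → N.primeFactors.card = 5 → 825265 ≤ N := by
  refine ⟨by norm_num, carm_val, ?_, carm_min⟩
  have : Nat.primeFactorsList 825265 = [5, 7, 17, 19, 73] := by simp
  rw [Nat.primeFactors, this]
  rfl
end

section
/- 321197185 is a Carmichael number with exactly 6 distinct prime factors, and it is the smallest such: every Carmichael number with exactly 6 distinct prime factors is at least 321197185. -/
def cmPrimes : List ℕ :=
  [3, 5, 7, 11, 13, 17, 19, 23, 29, 31, 37, 41, 43, 47, 53, 59, 61, 67, 71, 73, 79, 83, 89, 97,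
    101, 103, 107, 109, 113, 127, 131, 137, 139, 149, 151, 157, 163, 167, 173, 179, 181, 191,
    193, 197, 199, 211, 223, 227, 229, 233, 239, 241, 251, 257, 263, 269, 271, 277, 281, 283,
    293, 307, 311, 313, 317, 331, 337, 347, 349, 353, 359, 367, 373, 379, 383, 389, 397, 401,
    409, 419, 421, 431, 433, 439, 443, 449, 457, 461, 463, 467, 479, 487, 491, 499, 503, 509,
    521, 523, 541, 547, 557, 563, 569, 571, 577]

/-- no `m < n` with `m > p`, `m` plausibly prime completes `P`. -/
def cmLeaf (p P L : ℕ) (n : ℕ) : Bool :=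
  Nat.rec true (fun m ih =>
    cond (Nat.beq (Nat.mod (Nat.sub (Nat.mul P m) 1) L) 0)
      ((Nat.ble m p || not (Nat.beq (Nat.mod (Nat.sub (Nat.mul P m) 1) (Nat.sub m 1)) 0) ||
      not (Nat.beq (Nat.gcd m 385) 1 || Nat.beq (Nat.gcd m 385) m)) && ih) ih) n

def cmGo : List ℕ → ℕ → ℕ → ℕ → Bool
  | [], _, _, _ => true
  | p :: l, d, P, L =>
    (Nat.ble 321197185 (Nat.mul P (Nat.pow p (Nat.succ d))) || not (Nat.beq (Nat.gcd p L) 1) ||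
      not (Nat.beq (Nat.gcd P (Nat.sub p 1)) 1) ||
      cond (Nat.beq d 1) (cmLeaf p (Nat.mul P p) (Nat.lcm L (Nat.sub p 1))
          (Nat.succ (Nat.div 321197184 (Nat.mul P p))))
        (cmGo l (Nat.sub d 1) (Nat.mul P p) (Nat.lcm L (Nat.sub p 1)))) && cmGo l d P L

theorem cmGo_run : cmGo cmPrimes 5 1 1 = true := by decide +kernel

theorem cmLeaf_sound (p P L n m : ℕ) (h : cmLeaf p P L n = true) (hm : m < n)
    (h1 : L ∣ P * m - 1) (h2 : p < m) (h3 : m - 1 ∣ P * m - 1) (h4 : m.Prime) : False := by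
  induction n with
  | zero => omega
  | succ k ih =>
    have e : cmLeaf p P L (k+1) = cond (Nat.beq ((P * k - 1) % L) 0)
      ((Nat.ble k p || not (Nat.beq ((P * k - 1) % (k - 1)) 0) ||
      not (Nat.beq (Nat.gcd k 385) 1 || Nat.beq (Nat.gcd k 385) k)) && cmLeaf p P L k)
      (cmLeaf p P L k) := rfl
    rw [e] at h
    by_cases hk : m < k
    · refine ih ?_ hk
      revert h
      cases Nat.beq ((P * k - 1) % L) 0
      · exact id
      · intro h
        rw [cond_true, Bool.and_eq_true] at h
        exact h.2
    · obtain rfl : m = k := by omega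
      have h5 := (Nat.dvd_prime h4).1 (Nat.gcd_dvd_left m 385)
      have h6 := Nat.mod_eq_zero_of_dvd h1
      have h7 := Nat.mod_eq_zero_of_dvd h3
      have h9 : Nat.ble m p = false := by
        rw [← Bool.not_eq_true, Nat.ble_eq]; omega
      rw [h6, h7, h9] at h
      rcases h5 with h5 | h5
      · simp [h5] at h
      · simp [h5] at h

theorem cm_cop {N a b : ℕ} (hN : 1 ≤ N) (ha : a ∣ N) (hb : b ∣ N - 1) : Nat.gcd a b = 1 := by
  have h1 : Nat.gcd a b ∣ N := (Nat.gcd_dvd_left a b).trans ha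
  have h2 : Nat.gcd a b ∣ N - 1 := (Nat.gcd_dvd_right a b).trans hb
  have h3 := (Nat.dvd_sub h1 h2)
  rw [show N - (N - 1) = 1 by omega] at h3
  exact Nat.dvd_one.1 h3

theorem cmGo_sound (f N : ℕ) (hf : f.Prime) (hf1 : f - 1 ∣ N - 1) (hN : 1 ≤ N)
    (hB : N < 321197185) : ∀ (l : List ℕ) (d P L : ℕ) (S : List ℕ), cmGo l d P L = true →
    S.Sublist l → S.length = d → 1 ≤ d → S.Pairwise (· < ·) → (∀ p ∈ S, p < f) →
    P * S.prod * f = N → L ∣ N - 1 → (∀ p ∈ S, p - 1 ∣ N - 1) → False := by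
  intro l
  induction l with
  | nil =>
    intro d P L S _ hs hl hd
    rw [List.sublist_nil.1 hs] at hl
    simp at hl; omega
  | cons p l ih =>
    intro d P L S hgo hs hl hd hsort hlt hprod hL hS
    have e : cmGo (p :: l) d P L = ((Nat.ble 321197185 (P * p ^ (d + 1)) ||
      not (Nat.beq (Nat.gcd p L) 1) || not (Nat.beq (Nat.gcd P (p - 1)) 1) ||
      cond (Nat.beq d 1) (cmLeaf p (P * p) (Nat.lcm L (p - 1)) (321197184 / (P * p) + 1))
        (cmGo l (d - 1) (P * p) (Nat.lcm L (p - 1)))) && cmGo l d P L) := rfl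
    rw [e, Bool.and_eq_true] at hgo
    cases hs with
    | cons _ h => exact ih d P L S hgo.2 h hl hd hsort hlt hprod hL hS
    | @cons_cons S' _ _ h =>
      have hp1 := hS p (by simp)
      have hpf := hlt p (by simp)
      rw [List.prod_cons] at hprod
      rw [List.length_cons] at hl
      have hsort' := List.pairwise_cons.1 hsort
      have hpN : p ∣ N := ⟨P * S'.prod * f, by rw [← hprod]; ring⟩
      have hPN : P ∣ N := ⟨p * S'.prod * f, by rw [← hprod]; ring⟩
      have g1 := cm_cop hN hpN hL
      have g2 := cm_cop hN hPN hp1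
      have hL' : Nat.lcm L (p - 1) ∣ N - 1 := Nat.lcm_dvd hL hp1
      have hpow : p ^ S'.length ≤ S'.prod := by
        apply List.pow_card_le_prod
        intro x hx; exact (hsort'.1 x hx).le
      have hb : P * p ^ (d + 1) ≤ N := by
        calc P * p ^ (d + 1) = P * (p * p ^ S'.length) * p := by rw [← hl]; ring
          _ ≤ P * (p * S'.prod) * f := by gcongr
          _ = N := hprod
      have hb' : ¬ (321197185 ≤ P * p ^ (d + 1)) := by omega
      have h8 := hgo.1
      simp only [Bool.or_eq_true, Nat.ble_eq, hb', g1, g2, Nat.beq_refl, Bool.not_true,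
        Bool.false_eq_true, false_or] at h8
      by_cases hd1 : d = 1
      · subst hd1
        have : S' = [] := List.length_eq_zero_iff.1 (by omega)
        subst this
        simp only [List.prod_nil, mul_one] at hprod
        simp only [Nat.beq_refl, cond_true] at h8
        have hPp : 0 < P * p := by
          rcases Nat.eq_zero_or_pos (P * p) with h0 | h0
          · rw [h0] at hprod; omega
          · exact h0
        refine cmLeaf_sound p (P * p) _ _ f h8 ?_ (by rwa [hprod]) hpf (by rwa [hprod]) hf
        have : f ≤ 321197184 / (P * p) := by
          rw [Nat.le_div_iff_mul_le hPp, mul_comm, hprod]; omega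
        omega
      · have : Nat.beq d 1 = false := by
          rw [← Bool.not_eq_true, Nat.beq_eq]; exact hd1
        rw [this, cond_false] at h8
        exact ih (d - 1) (P * p) _ S' h8 h (by omega) (by omega) hsort'.2
          (fun q hq => hlt q (by simp [hq])) (by rw [← hprod]; ring) hL'
          (fun q hq => hS q (by simp [hq]))

theorem cmPrimes_cover : ∀ p < 584, p % 2 = 0 ∨ p = 1 ∨
    (∃ q ∈ [3, 5, 7, 11, 13, 17, 19, 23], p % q = 0 ∧ p ≠ q) ∨ p ∈ cmPrimes := by
  decide +kernel

theorem cmPrimes_mem {p : ℕ} (hp : p.Prime) (h2 : p % 2 = 1) (h : p < 584) : p ∈ cmPrimes := by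
  rcases cmPrimes_cover p h with h | h | ⟨q, hq, h3, h4⟩ | h
  · omega
  · exact absurd h hp.one_lt.ne'
  · rcases (Nat.dvd_prime hp).1 (Nat.dvd_of_mod_eq_zero h3) with h | h
    · subst h; simp at hq
    · exact absurd h.symm h4
  · exact h

theorem cmPrimes_sorted : cmPrimes.Pairwise (· < ·) := by decide +kernel

theorem cm_units {N : ℕ} (h : IsCarmichael N) {m : ℕ} (hm : m ∣ N) (v : (ZMod m)ˣ) :
    v ^ (N - 1) = 1 := by
  have h0 : 1 < N := h.1
  have : NeZero N := ⟨by omega⟩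
  obtain ⟨u, rfl⟩ := ZMod.unitsMap_surjective hm v
  rw [← map_pow]
  have : u ^ (N - 1) = 1 := by
    have h2 := h.2.2 (u : ZMod N).val (ZMod.val_coe_unit_coprime u)
    rw [← ZMod.natCast_eq_natCast_iff] at h2
    ext
    simpa using h2
  rw [this, map_one]

theorem cm_pred_dvd {N : ℕ} (h : IsCarmichael N) {p : ℕ} (hp : p.Prime) (hm : p ∣ N) :
    p - 1 ∣ N - 1 := by
  have := Fact.mk hp
  have h1 : Monoid.exponent (ZMod p)ˣ ∣ N - 1 := Monoid.exponent_dvd_of_forall_pow_eq_one (cm_units h hm)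
  rwa [IsCyclic.exponent_eq_card, Nat.card_eq_fintype_card, ZMod.card_units] at h1

theorem cm_squarefree {N : ℕ} (h : IsCarmichael N) : Squarefree N := by
  rw [Nat.squarefree_iff_prime_squarefree]
  intro p hp hpp
  have := Fact.mk hp
  have : NeZero (p * p) := ⟨by have := hp.pos; positivity⟩
  have hc : p ∣ Fintype.card (ZMod (p * p))ˣ := by
    rw [ZMod.card_units_eq_totient, Nat.totient_mul_of_prime_of_dvd hp (dvd_refl p)]
    exact dvd_mul_right _ _
  obtain ⟨x, hx⟩ := exists_prime_orderOf_dvd_card p hc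
  have h1 := orderOf_dvd_of_pow_eq_one (cm_units h hpp x)
  rw [hx] at h1
  have := cm_cop h.1.le ((dvd_mul_right p p).trans hpp) h1
  rw [Nat.gcd_self] at this
  exact hp.one_lt.ne' this

theorem cm_lower (N : ℕ) (h : IsCarmichael N) (hc : N.primeFactors.card = 6) :
    321197185 ≤ N := by
  by_contra hB
  push Not at hB
  have hprod := Nat.prod_primeFactors_of_squarefree (cm_squarefree h)
  have hlen : (N.primeFactors.sort (· ≤ ·)).length = 6 := by rw [Finset.length_sort, hc]
  have hsort : (N.primeFactors.sort (· ≤ ·)).Pairwise (· < ·) := Finset.sortedLT_sort _ |>.pairwise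
  have hmem : ∀ p ∈ N.primeFactors.sort (· ≤ ·), p.Prime ∧ p ∣ N := by
    intro p hp
    rw [Finset.mem_sort] at hp
    exact ⟨Nat.prime_of_mem_primeFactors hp, Nat.dvd_of_mem_primeFactors hp⟩
  have hprod' : (N.primeFactors.sort (· ≤ ·)).prod = N := by
    have := List.prod_toFinset (fun x : ℕ => x) (Finset.sort_nodup N.primeFactors (· ≤ ·))
    rw [Finset.sort_toFinset, hprod, List.map_id'] at this
    exact this.symm
  generalize N.primeFactors.sort (· ≤ ·) = T at *
  obtain ⟨a, b, c, d, e, f, rfl⟩ : ∃ a b c d e f, T = [a, b, c, d, e, f] := by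
    match T, hlen with
    | [a, b, c, d, e, f], _ => exact ⟨a, b, c, d, e, f, rfl⟩
  have pa := (hmem a (by simp)).1
  simp only [List.pairwise_cons, List.mem_cons, List.not_mem_nil, or_false, forall_eq_or_imp,
    forall_eq] at hsort
  obtain ⟨⟨ab, ac, ad, ae, af⟩, ⟨bc, bd, be, bf⟩, ⟨cd, ce, cf⟩, ⟨de, df⟩, ef, -⟩ := hsort
  have a2 := pa.two_le
  have hodd : ∀ p ∈ [a, b, c, d, e, f], p % 2 = 1 := by
    have hf := hmem f (by simp)
    have hf2 := hf.1.eq_two_or_odd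
    have h2N : ¬ 2 ∣ N := fun h2 => by
      have := cm_cop h.1.le h2 ((show 2 ∣ f - 1 by omega).trans (cm_pred_dvd h hf.1 hf.2))
      simp at this
    intro p hp
    rcases (hmem p hp).1.eq_two_or_odd with h2 | h2
    · exact absurd (h2 ▸ (hmem p hp).2) h2N
    · exact h2
  have oa := hodd a (by simp)
  have ob := hodd b (by simp)
  have oc := hodd c (by simp)
  have od := hodd d (by simp)
  have he : e < 584 := by
    by_contra hh
    have : 3 * 5 * 7 * 9 * 584 * 584 ≤ a * b * c * d * e * f := by
      gcongr <;> omega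
    simp only [List.prod_cons, List.prod_nil] at hprod'
    have e2 : a * b * c * d * e * f = N := by rw [← hprod']; ring
    omega
  have hN : 1 ≤ N := h.1.le
  have hl5 : ∀ p ∈ [a, b, c, d, e], p ∈ [a, b, c, d, e, f] := by
    intro p hp; simp at hp ⊢; tauto
  have hle : ∀ p ∈ [a, b, c, d, e], p ≤ e := by
    intro p hp; simp at hp; omega
  have hs5 : [a, b, c, d, e].Pairwise (· < ·) := by
    simp; omega
  have hsub : [a, b, c, d, e].Sublist cmPrimes := by
    apply List.sublist_of_subperm_of_pairwise ?_ hs5 cmPrimes_sorted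
    apply List.subperm_of_subset hs5.nodup
    intro p hp
    exact cmPrimes_mem (hmem p (hl5 p hp)).1 (hodd p (hl5 p hp)) (by have := hle p hp; omega)
  refine cmGo_sound f N (hmem f (by simp)).1 (cm_pred_dvd h (hmem f (by simp)).1
    (hmem f (by simp)).2) hN hB cmPrimes 5 1 1 [a, b, c, d, e] cmGo_run hsub rfl (by norm_num) hs5
    (fun p hp => by have := hle p hp; omega) ?_ (one_dvd _)
    (fun p hp => cm_pred_dvd h (hmem p (hl5 p hp)).1 (hmem p (hl5 p hp)).2)
  rw [← hprod']
  simp only [List.prod_cons, List.prod_nil]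
  ring

theorem cm_fermat {b p k : ℕ} (hp : p.Prime) (hb : Nat.Coprime b p) (hk : p - 1 ∣ k) :
    b ^ k ≡ 1 [MOD p] := by
  obtain ⟨t, rfl⟩ := hk
  have := (Nat.ModEq.pow_totient hb).pow t
  rwa [Nat.totient_prime hp, ← pow_mul, one_pow] at this

theorem cm_is : IsCarmichael 321197185 := by
  refine ⟨by norm_num, by norm_num, ?_⟩
  intro b hb
  have key : ∀ p : ℕ, p.Prime → p ∣ 321197185 → p - 1 ∣ 321197184 →
      b ^ (321197185 - 1) ≡ 1 [MOD p] := fun p h1 h2 h3 =>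
    cm_fermat h1 (Nat.Coprime.coprime_dvd_right h2 hb) h3
  have k1 := key 5 (by norm_num) (by norm_num) (by norm_num)
  have k2 := key 19 (by norm_num) (by norm_num) (by norm_num)
  have k3 := key 23 (by norm_num) (by norm_num) (by norm_num)
  have k4 := key 29 (by norm_num) (by norm_num) (by norm_num)
  have k5 := key 37 (by norm_num) (by norm_num) (by norm_num)
  have k6 := key 137 (by norm_num) (by norm_num) (by norm_num)
  clear key
  generalize b ^ (321197185 - 1) = x at *
  rw [show 321197185 = 5 * 19 * 23 * 29 * 37 * 137 by norm_num]
  rw [← Nat.modEq_and_modEq_iff_modEq_mul (by norm_num),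
    ← Nat.modEq_and_modEq_iff_modEq_mul (by norm_num),
    ← Nat.modEq_and_modEq_iff_modEq_mul (by norm_num),
    ← Nat.modEq_and_modEq_iff_modEq_mul (by norm_num),
    ← Nat.modEq_and_modEq_iff_modEq_mul (by norm_num)]
  exact ⟨⟨⟨⟨⟨k1, k2⟩, k3⟩, k4⟩, k5⟩, k6⟩

theorem cm_card : (Nat.primeFactors 321197185).card = 6 := by
  have : Nat.primeFactors 321197185 = {5, 19, 23, 29, 37, 137} := by
    rw [show 321197185 = 5 * 19 * 23 * 29 * 37 * 137 by norm_num]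
    rw [Nat.primeFactors_mul (by norm_num) (by norm_num),
      Nat.primeFactors_mul (by norm_num) (by norm_num),
      Nat.primeFactors_mul (by norm_num) (by norm_num),
      Nat.primeFactors_mul (by norm_num) (by norm_num),
      Nat.primeFactors_mul (by norm_num) (by norm_num),
      Nat.Prime.primeFactors (p := 5) (by norm_num), Nat.Prime.primeFactors (p := 19) (by norm_num),
      Nat.Prime.primeFactors (p := 23) (by norm_num), Nat.Prime.primeFactors (p := 29) (by norm_num),
      Nat.Prime.primeFactors (p := 37) (by norm_num),
      Nat.Prime.primeFactors (p := 137) (by norm_num)]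
    rfl
  rw [this]
  rfl

theorem carmichael_smallest_with_6_prime_factors :
    IsCarmichael 321197185 ∧ (Nat.primeFactors 321197185).card = 6 ∧
      ∀ N : ℕ, IsCarmichael N → N.primeFactors.card = 6 → 321197185 ≤ N :=
  ⟨cm_is, cm_card, cm_lower⟩
end

section
/- 5394826801 is a Carmichael number with exactly 7 distinct prime factors, and it is the smallest such: every Carmichael number with exactly 7 distinct prime factors is at least 5394826801. -/
def cInv (m : ℕ) : ℕ → ℕ → ℕ → ℕ → ℕ → ℕ
  | 0, _, _, u, _ => u
  | f + 1, a, b, u, v =>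
    bif Nat.beq b 0 then u else cInv m f b (a % b) v ((u + (m - v) * (a / b)) % m)

def cLoop (P L last : ℕ) : ℕ → ℕ → Bool
  | 0, _ => false
  | f + 1, r =>
    bif Nat.ble 5394826801 (P * r) then true else
    bif (Nat.ble r last || (Nat.ble 8 r && !(Nat.beq (Nat.gcd r 35) 1)) ||
      !(Nat.beq ((P - 1) % (r - 1)) 0)) then cLoop P L last f (r + L) else false

def cLeaf (P L last x : ℕ) : Bool :=
  bif Nat.beq ((P * x) % L) 1 then cLoop P L last 20 x else false

def cGo : List ℕ → ℕ → ℕ → ℕ → ℕ → Bool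
  | [], k, P, L, last =>
    bif Nat.beq k 1 then cLeaf P L last (cInv L 40 (P % L) L 1 0 % L) else false
  | q :: qs, k, P, L, last =>
    bif Nat.beq k 1 then cLeaf P L last (cInv L 40 (P % L) L 1 0 % L) else
    bif Nat.ble 5394826801 (P * q ^ k) then true else
    bif cGo qs k P L last then
      bif Nat.beq (Nat.gcd (q - 1) P) 1 then
        cGo qs (k - 1) (P * q) (Nat.lcm L (q - 1)) q
      else true
    else false

def cPrimes : List ℕ := [2, 3, 5, 7, 11, 13, 17, 19, 23, 29, 31, 37, 41, 43, 47, 53, 59, 61, 67,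
  71, 73, 79, 83, 89, 97, 101, 103, 107, 109, 113, 127, 131, 137, 139, 149, 151, 157, 163, 167,
  173, 179, 181, 191, 193, 197, 199]

set_option maxRecDepth 100000 in
theorem cGo_true : cGo cPrimes 7 1 1 1 = true := by
  decide +kernel

theorem cLoop_sound (P L last : ℕ) : ∀ (f r : ℕ), cLoop P L last f r = true →
    ∀ j : ℕ, Nat.Prime (r + j * L) → last < r + j * L → (r + j * L - 1) ∣ P - 1 →
      5394826801 ≤ P * (r + j * L) := by
  intro f
  induction f with
  | zero => intro r h; simp [cLoop] at h
  | succ f ih =>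
    intro r h j hp hl hd
    rw [cLoop] at h
    by_cases h1 : 5394826801 ≤ P * r
    · exact h1.trans (Nat.mul_le_mul_left _ (Nat.le_add_right _ _))
    have h1' : Nat.ble 5394826801 (P * r) = false := by
      rw [Bool.eq_false_iff]; simpa using h1
    rw [h1', cond_false] at h
    rcases Nat.eq_zero_or_pos j with rfl | hj
    · exfalso
      simp only [Nat.zero_mul, Nat.add_zero] at hp hl hd
      have a1 : Nat.ble r last = false := by
        rw [Bool.eq_false_iff]; simpa using hl
      have a2 : (Nat.ble 8 r && !(Nat.beq (Nat.gcd r 35) 1)) = false := by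
        by_cases h8 : 8 ≤ r
        · have : Nat.gcd r 35 = 1 := by
            have : Nat.Coprime r 35 := by
              rw [Nat.Prime.coprime_iff_not_dvd hp]
              intro hdvd
              have : r ∣ 5 * 7 := hdvd
              rcases (Nat.Prime.dvd_mul hp).1 this with h | h
              · have := Nat.le_of_dvd (by norm_num) h
                omega
              · have := Nat.le_of_dvd (by norm_num) h
                omega
            exact this
          rw [this]; simp
        · have : Nat.ble 8 r = false := by
            rw [Bool.eq_false_iff]; simpa using h8
          rw [this]; rfl
      have a3 : (P - 1) % (r - 1) = 0 := Nat.mod_eq_zero_of_dvd hd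
      rw [a1, a2, a3] at h
      simp at h
    · obtain ⟨i, rfl⟩ : ∃ i, j = i + 1 := ⟨j - 1, by omega⟩
      have e : r + (i + 1) * L = (r + L) + i * L := by ring
      rw [e] at hp hl hd ⊢
      refine ih (r + L) ?_ i hp hl hd
      revert h
      cases (Nat.ble r last || (Nat.ble 8 r && !(Nat.beq (Nat.gcd r 35) 1)) ||
        !(Nat.beq ((P - 1) % (r - 1)) 0)) <;> simp

theorem cLeaf_sound (P L last x : ℕ) (hx : x < L) (h : cLeaf P L last x = true)
    (r : ℕ) (hp : r.Prime) (hl : last < r) (hd : r - 1 ∣ P * r - 1) (hP : 0 < P)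
    (hL : L ∣ P * r - 1) : 5394826801 ≤ P * r := by
  unfold cLeaf at h
  have h1 : (P * x) % L = 1 := by
    by_contra hc
    have : Nat.beq ((P * x) % L) 1 = false := by
      rw [Bool.eq_false_iff]; simpa using hc
    rw [this] at h; simp at h
  rw [h1] at h
  have h2 : cLoop P L last 20 x = true := h
  have hr := hp.two_le
  have hPr : 1 ≤ P * r := Nat.mul_pos hP (by omega)
  have hL1 : 1 < L := by
    by_contra hc
    have : L = 0 ∨ L = 1 := by omega
    rcases this with rfl | rfl
    · omega
    · omega
  have h3 : P * r ≡ 1 [MOD L] := ((Nat.modEq_iff_dvd' hPr).2 hL).symm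
  have h4 : P * x ≡ 1 [MOD L] := by
    unfold Nat.ModEq; rw [h1, Nat.mod_eq_of_lt hL1]
  have hcop : Nat.gcd L P = 1 := by
    have := h4.gcd_eq
    have h5 : Nat.gcd (P * x) L = 1 := by simpa using this
    exact (Nat.Coprime.symm (Nat.Coprime.coprime_mul_right h5))
  have h6 : r ≡ x [MOD L] := Nat.ModEq.cancel_left_of_coprime hcop (h3.trans h4.symm)
  have h7 : r % L = x := by
    have := h6; unfold Nat.ModEq at this; rw [this, Nat.mod_eq_of_lt hx]
  have h8 : r = x + r / L * L := by
    have := Nat.mod_add_div r L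
    rw [h7] at this
    rw [Nat.mul_comm]; exact this.symm
  have hd' : r - 1 ∣ P - 1 := by
    have e : P * r - 1 = P * (r - 1) + (P - 1) := by
      obtain ⟨s, rfl⟩ : ∃ s, r = s + 1 := ⟨r - 1, by omega⟩
      simp only [Nat.add_sub_cancel]; rw [Nat.mul_add]; omega
    rw [e] at hd
    exact (Nat.dvd_add_right (Dvd.intro_left _ rfl)).1 hd
  have := cLoop_sound P L last 20 x h2 (r / L)
  rw [← h8] at this
  exact this hp hl hd'

theorem cGo_sound (N : ℕ) (hN : 1 ≤ N) : ∀ (l : List ℕ) (k P L last : ℕ),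
    cGo l k P L last = true → l.Pairwise (· < ·) → 0 < L →
    ∀ s : List ℕ, s.length = k → s ≠ [] → s.Pairwise (· < ·) → (∀ x ∈ s, x.Prime) →
      (∀ x ∈ s, last < x) → (∀ x ∈ s, x ∈ l ∨ ∀ y ∈ l, y < x) → (∀ x ∈ s, x - 1 ∣ N - 1) →
      L ∣ N - 1 → N = P * s.prod → 5394826801 ≤ N := by
  have leaf : ∀ (P L last : ℕ) (x : ℕ), cLeaf P L last (x % L) = true → 0 < L →
      ∀ s : List ℕ, s.length = 1 → (∀ x ∈ s, x.Prime) →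
      (∀ x ∈ s, last < x) → (∀ x ∈ s, x - 1 ∣ N - 1) →
      L ∣ N - 1 → N = P * s.prod → 5394826801 ≤ N := by
    intro P L last x h hL0 s hs hp hl hd hL hprod
    obtain ⟨r, rfl⟩ := List.length_eq_one_iff.1 hs
    simp only [List.mem_singleton, forall_eq, List.prod_singleton] at hp hl hd hprod
    have hP : 0 < P := by
      rcases Nat.eq_zero_or_pos P with rfl | h
      · simp at hprod; omega
      · exact h
    rw [hprod] at hd hL ⊢
    exact cLeaf_sound P L last _ (Nat.mod_lt _ hL0) h r hp hl hd hP hL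
  intro l
  induction l with
  | nil =>
    intro k P L last h _ hL0 s hs _ _ hp hl _ hd hL hprod
    by_cases hk : k = 1
    · subst hk
      exact leaf P L last _ h hL0 s hs hp hl hd hL hprod
    · have : Nat.beq k 1 = false := by
        rw [Bool.eq_false_iff]; simpa using hk
      rw [cGo, this] at h; simp at h
  | cons q qs ih =>
    intro k P L last h hsort hL0 s hs hne hss hp hl hmem hd hL hprod
    by_cases hk : k = 1
    · subst hk
      exact leaf P L last _ h hL0 s hs hp hl hd hL hprod
    have hk' : Nat.beq k 1 = false := by
      rw [Bool.eq_false_iff]; simpa using hk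
    rw [cGo, hk', cond_false] at h
    rw [List.pairwise_cons] at hsort
    have hge : ∀ x ∈ s, q ≤ x := by
      intro x hx
      rcases hmem x hx with h | h
      · rcases List.mem_cons.1 h with rfl | h
        · exact le_rfl
        · exact (hsort.1 x h).le
      · exact (h q (by simp)).le
    by_cases hb : 5394826801 ≤ P * q ^ k
    · refine hb.trans ?_
      rw [hprod, ← hs]
      exact Nat.mul_le_mul_left _ (List.pow_card_le_prod s q hge)
    have hb' : Nat.ble 5394826801 (P * q ^ k) = false := by
      rw [Bool.eq_false_iff]; simpa using hb
    rw [hb', cond_false] at h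
    have h1 : cGo qs k P L last = true := by
      cases hc : cGo qs k P L last
      · rw [hc] at h; simp at h
      · rfl
    rw [h1, cond_true] at h
    match s, hne with
    | x :: s', _ =>
    rw [List.pairwise_cons] at hss
    by_cases hxq : x = q
    · subst hxq
      have hx := hp x (by simp)
      have hx2 := hx.two_le
      have hdx := hd x (by simp)
      have hg : Nat.gcd (x - 1) P = 1 := by
        have g1 : Nat.gcd (x - 1) P ∣ N - 1 := (Nat.gcd_dvd_left _ _).trans hdx
        have g2 : Nat.gcd (x - 1) P ∣ N := (Nat.gcd_dvd_right _ _).trans (hprod ▸ Dvd.intro _ rfl)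
        have g3 := (Nat.dvd_sub g2 g1)
        have : N - (N - 1) = 1 := by omega
        rw [this] at g3
        exact Nat.dvd_one.1 g3
      rw [hg] at h
      have h2 : cGo qs (k - 1) (P * x) (Nat.lcm L (x - 1)) x = true := h
      refine ih _ _ _ _ h2 hsort.2 (Nat.lcm_pos hL0 (by omega)) s' ?_ ?_ hss.2 ?_ hss.1 ?_ ?_ ?_ ?_
      · rw [← hs]; simp
      · rintro rfl; simp at hs; omega
      · intro y hy; exact hp y (by simp [hy])
      · intro y hy
        rcases hmem y (by simp [hy]) with h | h
        · rcases List.mem_cons.1 h with rfl | h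
          · exact absurd (hss.1 y hy) (lt_irrefl _)
          · exact Or.inl h
        · exact Or.inr fun z hz => h z (by simp [hz])
      · intro y hy; exact hd y (by simp [hy])
      · exact Nat.lcm_dvd hL hdx
      · rw [hprod, List.prod_cons, Nat.mul_assoc]
    · have hqx : q < x := lt_of_le_of_ne (hge x (by simp)) (Ne.symm hxq)
      refine ih _ _ _ _ h1 hsort.2 hL0 (x :: s') hs (by simp)
        (List.pairwise_cons.2 hss) hp hl ?_ hd hL hprod
      intro y hy
      have hqy : q < y := by
        rcases List.mem_cons.1 hy with rfl | h
        · exact hqx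
        · exact hqx.trans (hss.1 y h)
      rcases hmem y hy with h | h
      · rcases List.mem_cons.1 h with rfl | h
        · exact absurd hqy (lt_irrefl _)
        · exact Or.inl h
      · exact Or.inr fun z hz => h z (by simp [hz])

theorem cKorselt (N : ℕ) (h : IsCarmichael N) :
    ArithmeticFunction.carmichael N ∣ N - 1 := by
  obtain ⟨h1, _, h⟩ := h
  rw [ArithmeticFunction.carmichael_eq_exponent (by omega)]
  apply Monoid.exponent_dvd_of_forall_pow_eq_one
  intro u
  have : NeZero N := ⟨by omega⟩
  have hc := ZMod.val_coe_unit_coprime u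
  have := (ZMod.natCast_eq_natCast_iff _ _ _).2 (h _ hc)
  ext
  simpa using this

theorem cPrime_dvd (N p : ℕ) (h : IsCarmichael N) (hp : p.Prime) (hd : p ∣ N) :
    p - 1 ∣ N - 1 := by
  by_cases h2 : p = 2
  · subst h2; simp
  · have := (ArithmeticFunction.carmichael_dvd hd).trans (cKorselt N h)
    rw [← pow_one p, ArithmeticFunction.carmichael_pow_of_prime_ne_two 1 hp h2, pow_one,
      Nat.totient_prime hp] at this
    exact this

theorem cSqfree (N : ℕ) (h : IsCarmichael N) : Squarefree N := by
  rw [Nat.squarefree_iff_prime_squarefree]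
  intro p hp hd
  rw [← pow_two] at hd
  have h1 := (ArithmeticFunction.carmichael_dvd hd).trans (cKorselt N h)
  have h2 : p ∣ ArithmeticFunction.carmichael (p ^ 2) := by
    by_cases h2 : p = 2
    · subst h2
      rw [ArithmeticFunction.carmichael_two_pow_of_le_two le_rfl]
      norm_num
    · rw [ArithmeticFunction.carmichael_pow_of_prime_ne_two 2 hp h2,
        Nat.totient_prime_pow hp (by norm_num)]
      simp
  have h3 := Nat.dvd_sub ((dvd_pow_self p two_ne_zero).trans hd) (h2.trans h1)
  have h4 := h.1
  have : N - (N - 1) = 1 := by omega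
  rw [this] at h3
  exact hp.one_lt.ne' (Nat.dvd_one.1 h3)

theorem cPrimes_mem : ∀ x : ℕ, x < 200 → x.Prime → x ∈ cPrimes := by
  intro x hx hp
  unfold cPrimes
  interval_cases x <;> first | (simp; done) | (exfalso; revert hp; norm_num)

theorem cFac : Nat.primeFactors 5394826801 = {7, 13, 17, 23, 31, 67, 73} := by
  have e : 5394826801 = ∏ p ∈ ({7, 13, 17, 23, 31, 67, 73} : Finset ℕ), p := by decide
  rw [e]
  apply Nat.primeFactors_prod
  intro p hp
  simp only [Finset.mem_insert, Finset.mem_singleton] at hp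
  rcases hp with rfl | rfl | rfl | rfl | rfl | rfl | rfl <;> norm_num

theorem cFermat (b p m : ℕ) (hp : p.Prime) (hb : Nat.Coprime b p) (hm : p - 1 ∣ m) :
    b ^ m ≡ 1 [MOD p] := by
  obtain ⟨c, rfl⟩ := hm
  have := (Nat.ModEq.pow_totient hb).pow c
  rwa [Nat.totient_prime hp, one_pow, ← pow_mul] at this

theorem carmichael_smallest_with_7_prime_factors :
    IsCarmichael 5394826801 ∧ (Nat.primeFactors 5394826801).card = 7 ∧
      ∀ N : ℕ, IsCarmichael N → N.primeFactors.card = 7 → 5394826801 ≤ N := by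
  refine ⟨⟨by norm_num, by norm_num, ?_⟩, ?_, ?_⟩
  · intro b hb
    have key : ∀ p : ℕ, p.Prime → p ∣ 5394826801 → p - 1 ∣ 5394826801 - 1 →
        b ^ (5394826801 - 1) ≡ 1 [MOD p] := fun p hp h1 h2 =>
      cFermat b p _ hp (Nat.Coprime.coprime_dvd_right h1 hb) h2
    have k1 := key 7 (by norm_num) (by norm_num) (by norm_num)
    have k2 := key 13 (by norm_num) (by norm_num) (by norm_num)
    have k3 := key 17 (by norm_num) (by norm_num) (by norm_num)
    have k4 := key 23 (by norm_num) (by norm_num) (by norm_num)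
    have k5 := key 31 (by norm_num) (by norm_num) (by norm_num)
    have k6 := key 67 (by norm_num) (by norm_num) (by norm_num)
    have k7 := key 73 (by norm_num) (by norm_num) (by norm_num)
    generalize b ^ (5394826801 - 1) = z at *
    have j2 := (Nat.modEq_and_modEq_iff_modEq_mul (by norm_num)).1 ⟨k1, k2⟩
    have j3 := (Nat.modEq_and_modEq_iff_modEq_mul (by norm_num)).1 ⟨j2, k3⟩
    have j4 := (Nat.modEq_and_modEq_iff_modEq_mul (by norm_num)).1 ⟨j3, k4⟩
    have j5 := (Nat.modEq_and_modEq_iff_modEq_mul (by norm_num)).1 ⟨j4, k5⟩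
    have j6 := (Nat.modEq_and_modEq_iff_modEq_mul (by norm_num)).1 ⟨j5, k6⟩
    have j7 := (Nat.modEq_and_modEq_iff_modEq_mul (by norm_num)).1 ⟨j6, k7⟩
    norm_num at j7
    exact j7
  · rw [cFac]; decide
  · intro N hN hcard
    have hpr : ∀ x ∈ N.primeFactors.sort (· ≤ ·), x.Prime ∧ x ∣ N := by
      intro x hx
      rw [Finset.mem_sort] at hx
      exact ⟨Nat.prime_of_mem_primeFactors hx, Nat.dvd_of_mem_primeFactors hx⟩
    refine cGo_sound N hN.1.le cPrimes 7 1 1 1 cGo_true (by decide) one_pos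
      (N.primeFactors.sort (· ≤ ·)) ?_ ?_ ?_ (fun x hx => (hpr x hx).1)
      (fun x hx => (hpr x hx).1.one_lt) ?_
      (fun x hx => cPrime_dvd N x hN (hpr x hx).1 (hpr x hx).2) (one_dvd _) ?_
    · rw [Finset.length_sort, hcard]
    · intro h
      have := congrArg List.length h
      rw [Finset.length_sort, hcard] at this
      simp at this
    · exact (Finset.sortedLT_sort _).pairwise
    · intro x hx
      by_cases h : x < 200
      · exact Or.inl (cPrimes_mem x h (hpr x hx).1)
      · right
        intro y hy
        have : ∀ y ∈ cPrimes, y < 200 := by decide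
        exact (this y hy).trans_le (not_lt.1 h)
    · rw [one_mul]
      have h1 : (N.primeFactors.sort (· ≤ ·)).prod = ∏ p ∈ N.primeFactors, p := by
        rw [← Multiset.prod_coe, Finset.sort_eq]
        exact Finset.prod_val _
      rw [h1, Nat.prod_primeFactors_of_squarefree (cSqfree N hN)]
end

section
/- 9746347772161 is a Carmichael number with exactly 9 distinct prime factors, and it is the smallest such: every Carmichael number with exactly 9 distinct prime factors is at least 9746347772161. -/
namespace CarmSearch

def leafTest (P L q : ℕ) : Bool :=
  (Nat.beq ((P * q - 1) % L) 0) && ((Nat.beq ((P * q - 1) % (q - 1)) 0) &&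
    (!(Nat.beq (q % 5) 0) || Nat.beq q 5))

def leafLoop (P L p : ℕ) : ℕ → Bool
  | 0 => true
  | f + 1 => (!(leafTest P L (p + f))) && leafLoop P L p f

theorem leafLoop_sound (P L p : ℕ) : ∀ n, leafLoop P L p n = true →
    ∀ q, p ≤ q → q < p + n → leafTest P L q = false := by
  intro n
  induction n with
  | zero => intro _ q h1 h2; omega
  | succ n ih =>
    intro h q h1 h2
    simp only [leafLoop, Bool.and_eq_true, Bool.not_eq_true'] at h
    by_cases hq : q = p + n
    · rw [hq]; exact h.1
    · exact ih h.2 q h1 (by omega)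

def search (B M : ℕ) : List ℕ → ℕ → ℕ → ℕ → Bool
  | [], k, P, _ => Nat.ble B (P * M ^ k)
  | p :: ps, k, P, L =>
    Nat.ble B (P * p ^ k) ||
    (bif Nat.beq k 1 then leafLoop P L p ((B - 1) / P + 1 - p)
     else ((!(Nat.beq (Nat.gcd P (p - 1)) 1)) ||
            search B M ps (k - 1) (P * p) (Nat.lcm L (p - 1))) && search B M ps k P L)

theorem prod_ge (T : Finset ℕ) (p : ℕ) (h : ∀ q ∈ T, p ≤ q) : p ^ T.card ≤ ∏ q ∈ T, q :=
  Finset.pow_card_le_prod T (fun q => q) p h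

theorem search_sound (B M N : ℕ) (hN : N < B) (hN1 : 1 ≤ N) :
    ∀ (ps : List ℕ) (k P L : ℕ) (T : Finset ℕ), search B M ps k P L = true →
      ps.Pairwise (· < ·) → (∀ p ∈ ps, p ≤ M) → T.card = k → 1 ≤ k →
      N = P * ∏ q ∈ T, q → L ∣ N - 1 → (∀ q ∈ T, q - 1 ∣ N - 1) →
      (∀ q ∈ T, q.Prime) → (∀ q ∈ T, q ∈ ps ∨ M ≤ q) → False := by
  intro ps
  induction ps with
  | nil =>
    intro k P L T hs _ _ hc _ hNP _ _ _ hT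
    simp only [search, Nat.ble_eq] at hs
    have h1 := prod_ge T M (fun q hq => by simpa using hT q hq)
    rw [hc] at h1
    have := Nat.mul_le_mul_left P h1
    omega
  | cons p ps ih =>
    intro k P L T hs hpw hM hc hk hNP hL hd hpr hT
    have hpT : ∀ q ∈ T, p ≤ q := by
      intro q hq
      rcases hT q hq with h | h
      · rcases List.mem_cons.1 h with h | h
        · exact h.ge
        · exact ((List.pairwise_cons.1 hpw).1 q h).le
      · exact (hM p (by simp)).trans h
    have hP0 : 0 < P := by
      rcases Nat.eq_zero_or_pos P with h | h
      · subst h; simp at hNP; omega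
      · exact h
    rw [search, Bool.or_eq_true] at hs
    rcases hs with hs | hs
    · have h1 := prod_ge T p hpT
      rw [hc] at h1
      have := Nat.mul_le_mul_left P h1
      have := Nat.le_of_ble_eq_true hs
      omega
    · by_cases hk1 : k = 1
      · subst hk1
        obtain ⟨q, rfl⟩ := Finset.card_eq_one.1 hc
        simp only [Finset.prod_singleton] at hNP
        simp only [Nat.beq_refl, cond_true] at hs
        have hq := hpT q (by simp)
        have hqB : q ≤ (B - 1) / P := by
          rw [Nat.le_div_iff_mul_le hP0, mul_comm]; omega
        have h2 := leafLoop_sound _ _ _ _ hs q hq (by omega)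
        have h3 := hd q (by simp)
        have h5 : q % 5 ≠ 0 ∨ q = 5 := by
          by_contra hh
          push Not at hh
          rcases (Nat.dvd_prime (hpr q (by simp))).1 (Nat.dvd_of_mod_eq_zero hh.1) with h | h
          · omega
          · exact hh.2 h.symm
        have h6 : (!(Nat.beq (q % 5) 0) || Nat.beq q 5) = true := by
          rw [Bool.or_eq_true, Nat.beq_eq, Bool.not_eq_true', ← Bool.not_eq_true, Nat.beq_eq]
          exact h5
        rw [hNP] at hL h3
        rw [leafTest, Nat.mod_eq_zero_of_dvd hL, Nat.mod_eq_zero_of_dvd h3, h6] at h2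
        simp at h2
      · have hkb : Nat.beq k 1 = false := by
          rw [← Bool.not_eq_true, Nat.beq_eq]; exact hk1
        rw [hkb, cond_false, Bool.and_eq_true, Bool.or_eq_true] at hs
        have hpw' := (List.pairwise_cons.1 hpw).2
        have hM' : ∀ p ∈ ps, p ≤ M := fun x hx => hM x (by simp [hx])
        by_cases hp : p ∈ T
        · have hprod : p * ∏ q ∈ T.erase p, q = ∏ q ∈ T, q :=
            Finset.mul_prod_erase T (fun q => q) hp
          have hpd := hd p hp
          rcases hs.1 with h | h
          · have hg : Nat.gcd P (p - 1) = 1 := by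
              have : Nat.Coprime N (N - 1) := by
                have h5 : N = (N - 1) + 1 := by omega
                rw [h5]; simp
              exact (this.coprime_dvd_left ⟨_, hNP⟩).coprime_dvd_right hpd
            rw [hg] at h
            simp at h
          · refine ih (k - 1) (P * p) _ (T.erase p) h hpw' hM' ?_ (by omega) ?_
              (Nat.lcm_dvd hL hpd) (fun q hq => hd q (Finset.mem_of_mem_erase hq))
              (fun q hq => hpr q (Finset.mem_of_mem_erase hq)) ?_
            · rw [Finset.card_erase_of_mem hp, hc]
            · rw [hNP, mul_assoc, hprod]
            · intro q hq
              have hne := Finset.ne_of_mem_erase hq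
              rcases hT q (Finset.mem_of_mem_erase hq) with h' | h'
              · left
                rcases List.mem_cons.1 h' with h' | h'
                · exact absurd h' hne
                · exact h'
              · exact Or.inr h'
        · refine ih k P L T hs.2 hpw' hM' hc hk hNP hL hd hpr ?_
          intro q hq
          rcases hT q hq with h' | h'
          · rcases List.mem_cons.1 h' with h' | h'
            · subst h'; exact absurd hq hp
            · exact Or.inl h'
          · exact Or.inr h'

def primesList : List ℕ :=
  [   3, 5, 7, 11, 13, 17, 19, 23, 29, 31, 37, 41, 43, 47, 53, 59, 61, 67, 71, 73, 79, 83,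
   89, 97, 101, 103, 107, 109, 113, 127, 131, 137, 139, 149, 151, 157, 163, 167, 173, 179,
   181, 191, 193, 197, 199, 211, 223, 227, 229, 233, 239, 241, 251, 257, 263, 269, 271,
   277, 281, 283, 293, 307, 311, 313, 317, 331, 337, 347, 349, 353, 359, 367, 373, 379,
   383, 389, 397, 401, 409, 419, 421, 431, 433, 439, 443, 449, 457, 461, 463, 467, 479,
   487, 491, 499, 503, 509, 521, 523, 541, 547, 557, 563, 569, 571, 577, 587, 593, 599,
   601, 607, 613, 617, 619, 631, 641, 643, 647, 653, 659, 661, 673, 677, 683, 691, 701,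
   709, 719, 727, 733, 739, 743, 751, 757, 761, 769, 773, 787, 797, 809, 811, 821, 823,
   827, 829, 839, 853, 857, 859, 863, 877, 881, 883, 887, 907, 911, 919, 929, 937, 941,
   947, 953, 967, 971, 977, 983, 991, 997, 1009, 1013, 1019, 1021, 1031, 1033, 1039, 1049,
   1051, 1061, 1063, 1069, 1087, 1091, 1093, 1097, 1103, 1109, 1117, 1123, 1129, 1151,
   1153, 1163, 1171, 1181, 1187, 1193, 1201, 1213, 1217, 1223, 1229, 1231, 1237, 1249,
   1259, 1277, 1279, 1283, 1289, 1291, 1297, 1301, 1303, 1307, 1319, 1321, 1327, 1361,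
   1367, 1373, 1381, 1399, 1409]

def complTest : ℕ → Bool
  | 0 => true
  | n + 1 => (primesList.elem n || Nat.ble n 2 ||
      [2, 3, 5, 7, 11, 13, 17, 19, 23, 29, 31, 37].any
        (fun d => Nat.beq (n % d) 0 && !(Nat.beq n d))) && complTest n

theorem complTest_sound : ∀ m, complTest m = true → ∀ n, n < m → n.Prime → n ≠ 2 →
    n ∈ primesList := by
  intro m
  induction m with
  | zero => intro _ n h; omega
  | succ m ih =>
    intro h n hn hp h2
    rw [complTest, Bool.and_eq_true, Bool.or_eq_true, Bool.or_eq_true] at h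
    by_cases hnm : n = m
    · subst hnm
      rcases h.1 with (h | h) | h
      · simpa using h
      · have := Nat.le_of_ble_eq_true h
        have := hp.two_le
        omega
      · rw [List.any_eq_true] at h
        obtain ⟨d, hd, hh⟩ := h
        simp only [Bool.and_eq_true, Nat.beq_eq, Bool.not_eq_true'] at hh
        have hdv := Nat.dvd_of_mod_eq_zero hh.1
        rcases (Nat.dvd_prime hp).1 hdv with h1 | h1
        · subst h1; simp at hd
        · subst h1; simp at hh
    · exact ih h.2 n (by omega) hp h2

set_option maxRecDepth 100000 in
theorem compl_ok : complTest 1420 = true := by decide +kernel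

set_option maxRecDepth 100000 in
theorem search_ok : search 9746347772161 1420 primesList 9 1 1 = true := by decide +kernel

set_option maxRecDepth 100000 in
theorem list_sorted : primesList.Pairwise (· < ·) := by
  rw [← List.isChain_iff_pairwise]
  decide +kernel

set_option maxRecDepth 100000 in
theorem list_le : ∀ p ∈ primesList, p ≤ 1420 := by decide +kernel

theorem sqfree {N : ℕ} (h : IsCarmichael N) : Squarefree N := by
  obtain ⟨h1, _, hb⟩ := h
  rw [Nat.squarefree_iff_prime_squarefree]
  rintro p hp ⟨m, hm⟩
  -- b = 1 + p * m
  have hm0 : 0 < m := by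
    rcases Nat.eq_zero_or_pos m with h | h
    · subst h; omega
    · exact h
  have hc : Nat.Coprime (1 + p * m) N := by
    have h3 : Nat.Coprime (1 + p * m) (p * m) := by simp
    have h4 := h3.mul_right (h3.coprime_dvd_right ⟨m, rfl⟩)
    rw [hm]
    have h5 : p * p * m = p * m * p := by ring
    rw [h5]; exact h4
  have h6 := hb _ hc
  have key : ∀ n, (1 + p * m) ^ n ≡ 1 + n * (p * m) [MOD N] := by
    intro n
    induction n with
    | zero => simp; rfl
    | succ n ih =>
      rw [pow_succ]
      refine (ih.mul_right _).trans ?_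
      have h7 : (1 + n * (p * m)) * (1 + p * m) = (1 + (n + 1) * (p * m)) + N * (n * m) := by
        rw [hm]; ring
      rw [h7]
      simp [Nat.ModEq]
  have h8 := (key (N - 1)).symm.trans h6
  have h9 : N ∣ (N - 1) * (p * m) := by
    have := (Nat.modEq_iff_dvd' (by omega)).1 h8.symm
    simpa using this
  have h10 : Nat.Coprime N (N - 1) := by
    have h5 : N = (N - 1) + 1 := by omega
    rw [h5]; simp
  have h11 := Nat.le_of_dvd (Nat.mul_pos hp.pos hm0) (h10.dvd_of_dvd_mul_left h9)
  have h12 : p * p * m = p * (p * m) := by ring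
  have := hp.two_le
  have h13 : 0 < p * m := Nat.mul_pos hp.pos hm0
  nlinarith

theorem korselt {N : ℕ} (h : IsCarmichael N) {p : ℕ} (hp : p.Prime) (hpN : p ∣ N) :
    p - 1 ∣ N - 1 := by
  obtain ⟨h1, _, hb⟩ := h
  have : Fact p.Prime := ⟨hp⟩
  have : NeZero N := ⟨by omega⟩
  obtain ⟨g, hg⟩ := IsCyclic.exists_generator (α := (ZMod p)ˣ)
  obtain ⟨u, hu⟩ := ZMod.unitsMap_surjective hpN g
  have hu1 : u ^ (N - 1) = 1 := by
    have h2 := hb (u : ZMod N).val (ZMod.val_coe_unit_coprime u)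
    have h3 := (ZMod.natCast_eq_natCast_iff _ _ _).2 h2
    ext
    push_cast at h3
    rw [ZMod.natCast_zmod_val] at h3
    simpa using h3
  have hg1 : g ^ (N - 1) = 1 := by
    rw [← hu, ← map_pow, hu1, map_one]
  have h4 := orderOf_dvd_of_pow_eq_one hg1
  rwa [orderOf_eq_card_of_forall_mem_zpowers hg, Nat.card_eq_fintype_card,
    ZMod.card_units] at h4

theorem lower (N : ℕ) (h : IsCarmichael N) (hc : N.primeFactors.card = 9) :
    9746347772161 ≤ N := by
  by_contra hlt
  push Not at hlt
  have h1 := h.1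
  have hk : ∀ q ∈ N.primeFactors, q - 1 ∣ N - 1 := fun q hq =>
    korselt h (Nat.prime_of_mem_primeFactors hq) (Nat.dvd_of_mem_primeFactors hq)
  have h2 : ∀ q ∈ N.primeFactors, q ≠ 2 := by
    rintro q hq rfl
    obtain ⟨r, hr, hr2⟩ := Finset.exists_mem_ne (s := N.primeFactors) (by omega) 2
    have h3 := hk r hr
    have h4 := (Nat.prime_of_mem_primeFactors hr).eq_two_or_odd
    have h5 : 2 ∣ r - 1 := by omega
    have h6 := h5.trans h3
    have h7 := Nat.dvd_of_mem_primeFactors hq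
    omega
  refine search_sound 9746347772161 1420 N hlt (by omega) primesList 9 1 1 N.primeFactors
    search_ok list_sorted list_le hc (by norm_num) ?_ (one_dvd _) hk
    (fun q hq => Nat.prime_of_mem_primeFactors hq) ?_
  · rw [one_mul, Nat.prod_primeFactors_of_squarefree (sqfree h)]
  · intro q hq
    by_cases hq2 : q < 1420
    · exact Or.inl (complTest_sound 1420 compl_ok q hq2 (Nat.prime_of_mem_primeFactors hq) (h2 q hq))
    · exact Or.inr (by omega)

theorem pf : Nat.primeFactors 9746347772161 = {7, 11, 13, 17, 19, 31, 37, 41, 641} := by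
  have h : (9746347772161 : ℕ) = ∏ p ∈ ({7, 11, 13, 17, 19, 31, 37, 41, 641} : Finset ℕ), p := by
    decide +kernel
  rw [h]
  apply Nat.primeFactors_prod
  intro p hp
  simp only [Finset.mem_insert, Finset.mem_singleton] at hp
  rcases hp with rfl | rfl | rfl | rfl | rfl | rfl | rfl | rfl | rfl <;> norm_num

theorem flt {b p N : ℕ} (hp : p.Prime) (hb : Nat.Coprime b p) (hd : p - 1 ∣ N) :
    b ^ N ≡ 1 [MOD p] := by
  obtain ⟨k, rfl⟩ := hd
  have h := Nat.ModEq.pow_totient hb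
  rw [Nat.totient_prime hp] at h
  rw [pow_mul]
  simpa using h.pow k

theorem isCarm : IsCarmichael 9746347772161 := by
  refine ⟨by norm_num, by norm_num, ?_⟩
  intro b hb
  have h : (9746347772161 : ℕ) = 7 * (11 * (13 * (17 * (19 * (31 * (37 * (41 * 641))))))) := by
    norm_num
  generalize hE : 9746347772161 - 1 = E
  norm_num at hE
  have hf : ∀ p : ℕ, p.Prime → p ∣ 9746347772161 → p - 1 ∣ E → b ^ E ≡ 1 [MOD p] :=
    fun p hp h1 h2 => flt hp (hb.coprime_dvd_right h1) h2
  subst hE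
  have a1 := hf 7 (by norm_num) (by norm_num) (by norm_num)
  have a2 := hf 11 (by norm_num) (by norm_num) (by norm_num)
  have a3 := hf 13 (by norm_num) (by norm_num) (by norm_num)
  have a4 := hf 17 (by norm_num) (by norm_num) (by norm_num)
  have a5 := hf 19 (by norm_num) (by norm_num) (by norm_num)
  have a6 := hf 31 (by norm_num) (by norm_num) (by norm_num)
  have a7 := hf 37 (by norm_num) (by norm_num) (by norm_num)
  have a8 := hf 41 (by norm_num) (by norm_num) (by norm_num)
  have a9 := hf 641 (by norm_num) (by norm_num) (by norm_num)
  rw [h]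
  have c := fun {m n : ℕ} (hmn : Nat.Coprime m n) (x : b ^ 9746347772160 ≡ 1 [MOD m])
    (y : b ^ 9746347772160 ≡ 1 [MOD n]) => (Nat.modEq_and_modEq_iff_modEq_mul hmn).1 ⟨x, y⟩
  exact c (by norm_num) a1 (c (by norm_num) a2 (c (by norm_num) a3 (c (by norm_num) a4
    (c (by norm_num) a5 (c (by norm_num) a6 (c (by norm_num) a7 (c (by norm_num) a8 a9)))))))

end CarmSearch

theorem carmichael_smallest_with_9_prime_factors :
    IsCarmichael 9746347772161 ∧ (Nat.primeFactors 9746347772161).card = 9 ∧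
      ∀ N : ℕ, IsCarmichael N → N.primeFactors.card = 9 → 9746347772161 ≤ N := by
  refine ⟨CarmSearch.isCarm, ?_, CarmSearch.lower⟩
  rw [CarmSearch.pf]
  decide
end

section
/- 1436697831295441 is a Carmichael number with exactly 10 distinct prime factors, and it is the smallest such: every Carmichael number with exactly 10 distinct prime factors is at least 1436697831295441. -/
namespace Car

def B : ℕ := 1436697831295441

/-- `force n f = f n`, but evaluates `n` first. -/
def force {α : Type} (n : ℕ) (f : ℕ → α) : α :=
  match n with
  | 0 => f 0
  | m + 1 => f (m + 1)

theorem force_eq {α : Type} (n : ℕ) (f : ℕ → α) : force n f = f n := by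
  cases n <;> rfl

/-- modular inverse by the extended Euclidean algorithm (unverified; its output is checked). -/
def inv : ℕ → ℕ → ℕ → ℕ → ℕ → ℕ → ℕ
  | 0, _, _, _, s0, _ => s0
  | f + 1, m, r0, r1, s0, s1 =>
    match r1 with
    | 0 => s0
    | r + 1 => force ((s0 + (m - (r0 / (r + 1)) % m) * s1) % m) fun s2 =>
        inv f m (r + 1) (r0 % (r + 1)) s1 s2

def test (p P q : ℕ) : Bool :=
  Nat.blt q p || !(Nat.beq ((P - 1) % (q - 1)) 0) ||
    (!(Nat.beq (Nat.gcd q 15015) 1) && !(Nat.beq (Nat.gcd q 15015) q))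

def cand (p P L : ℕ) : ℕ → ℕ → Bool
  | 0, _ => false
  | f + 1, q => Nat.ble B (P * q) || (test p P q && cand p P L f (q + L))

def leaf (p P L c : ℕ) : Bool :=
  Nat.beq (P * c % L) 1 && (Nat.blt c L && cand p P L 10 c)

def go : List ℕ → ℕ → ℕ → ℕ → Bool
  | [], _, _, _ => false
  | p :: l, k, P, L =>
    bif Nat.beq k 1 then force (inv 100 L L (P % L) 0 1) fun c => leaf p P L c
    else Nat.ble B (P * p ^ k) ||
      ((!(Nat.beq (Nat.gcd (p - 1) P) 1) || force (k - 1) fun k' =>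
        force (P * p) fun P' => force (Nat.lcm L (p - 1)) fun L' => go l k' P' L') &&
        go l k P L)

def primes : List ℕ := [3, 5, 7, 11, 13, 17, 19, 23, 29, 31, 37, 41, 43, 47, 53, 59, 61, 67, 71, 73, 79, 83, 89, 97, 101, 103, 107, 109, 113, 127, 131, 137, 139, 149, 151, 157, 163, 167, 173, 179, 181, 191, 193, 197, 199, 211, 223, 227, 229, 233, 239, 241, 251, 257, 263, 269, 271, 277, 281, 283, 293, 307, 311, 313, 317, 331, 337, 347, 349, 353, 359, 367, 373, 379, 383, 389, 397, 401, 409, 419, 421, 431, 433, 439, 443, 449, 457, 461, 463, 467, 479, 487, 491, 499]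

theorem go_primes : go primes 10 1 2 = true := by decide +kernel

theorem primes_sorted : primes.Pairwise (· < ·) := by decide +kernel

theorem primes_cover : ∀ q < 500, 2 < q → (∀ d ∈ [2,3,5,7,11,13,17,19], d ∣ q → d = q) →
    q ∈ primes := by decide +kernel

theorem cand_sound (p P L q : ℕ) (hL : P * q < B) (ht : test p P q = false) :
    ∀ f c j, q = c + j * L → cand p P L f c = true → False := by
  intro f
  induction f with
  | zero => intro c j _ h; simp [cand] at h
  | succ f ih =>
    intro c j hq h
    simp only [cand, Bool.or_eq_true, Bool.and_eq_true, Nat.ble_eq] at h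
    rcases h with h | ⟨h1, h2⟩
    · have : P * c ≤ P * q := Nat.mul_le_mul_left _ (by rw [hq]; exact Nat.le_add_right _ _)
      omega
    · cases j with
      | zero =>
        have : q = c := by simpa using hq
        subst this
        rw [ht] at h1; exact absurd h1 (by simp)
      | succ j => exact ih (c + L) j (by rw [hq]; ring) h2

theorem test_false {p P q : ℕ} (hq : q.Prime) (hpq : p ≤ q) (hd : q - 1 ∣ P - 1) :
    test p P q = false := by
  have h1 : Nat.gcd q 15015 = 1 ∨ Nat.gcd q 15015 = q :=
    (Nat.dvd_prime hq).1 (Nat.gcd_dvd_left _ _)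
  have h2 : Nat.blt q p = false := by
    rw [Bool.eq_false_iff]; intro h; simp [Nat.blt, Nat.ble_eq] at h; omega
  have h3 : (P - 1) % (q - 1) = 0 := Nat.mod_eq_zero_of_dvd hd
  unfold test
  rw [h2, h3]
  rcases h1 with h | h <;> rw [h] <;> simp

theorem leaf_sound {p P L c q : ℕ} (h : leaf p P L c = true) (hq : q.Prime) (hpq : p ≤ q)
    (hP : 0 < P) (hB : P * q < B) (hL : L ∣ P * q - 1) (hd : q - 1 ∣ P * q - 1) : False := by
  simp only [leaf, Bool.and_eq_true, Nat.beq_eq] at h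
  obtain ⟨h1, h2, h3⟩ := h
  have h2 : c < L := by simpa [Nat.blt, Nat.ble_eq] using h2
  have hq2 := hq.two_le
  have hPq : 1 ≤ P * q := Nat.mul_pos hP (by omega)
  have hL2 : 1 < L := by
    rcases Nat.lt_or_ge 1 L with h | h
    · exact h
    · interval_cases L
      · omega
      · simp [Nat.mod_one] at h1
  have e1 : P * q ≡ 1 [MOD L] := ((Nat.modEq_iff_dvd' hPq).2 hL).symm
  have e2 : P * c ≡ 1 [MOD L] := by
    unfold Nat.ModEq; rw [h1, Nat.mod_eq_of_lt hL2]
  have hcop : Nat.gcd L P = 1 := by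
    have : Nat.Coprime (P * q) L := by
      rw [Nat.coprime_iff_gcd_eq_one, e1.gcd_eq]; simp
    exact (Nat.Coprime.coprime_mul_right this).symm
  have e3 : q ≡ c [MOD L] := Nat.ModEq.cancel_left_of_coprime hcop (e1.trans e2.symm)
  have e4 : q % L = c := by
    have := e3; unfold Nat.ModEq at this; rwa [Nat.mod_eq_of_lt h2] at this
  have e5 : q = c + (q / L) * L := by
    conv_lhs => rw [← Nat.mod_add_div q L, e4, Nat.mul_comm]
  refine cand_sound p P L q hB (test_false hq hpq ?_) 10 c (q / L) e5 h3
  have : P * q - 1 = P * (q - 1) + (P - 1) := by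
    obtain ⟨r, rfl⟩ : ∃ r, q = r + 1 := ⟨q - 1, by omega⟩
    simp only [Nat.add_sub_cancel, Nat.mul_add]; omega
  rw [this] at hd
  exact (Nat.dvd_add_right (Dvd.intro_left _ rfl)).1 hd

theorem go_sound (N : ℕ) (hN : N < B) : ∀ (l : List ℕ) (k P L : ℕ) (S : Finset ℕ),
    go l k P L = true → l.Pairwise (· < ·) → (∀ x ∈ l, x < 500) →
    (∀ q ∈ S, q.Prime ∧ q - 1 ∣ N - 1 ∧ (q ∈ l ∨ 500 ≤ q)) → S.card = k → 1 ≤ k → 0 < P →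
    P * ∏ q ∈ S, q = N → L ∣ N - 1 → False := by
  intro l
  induction l with
  | nil => intro k P L S h; simp [go] at h
  | cons p l ih =>
    intro k P L S h hsort hlt hS hcard hk hP hprod hL
    rw [List.pairwise_cons] at hsort
    have hge : ∀ q ∈ S, p ≤ q := by
      intro q hq
      rcases (hS q hq).2.2 with h | h
      · rcases List.mem_cons.1 h with h | h
        · exact h.ge
        · exact (hsort.1 q h).le
      · have := hlt p (by simp); omega
    have hlt' : ∀ x ∈ l, x < 500 := fun x hx => hlt x (by simp [hx])
    rw [go] at h
    simp only [force_eq] at h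
    by_cases hk1 : k = 1
    · subst hk1
      obtain ⟨q, rfl⟩ := Finset.card_eq_one.1 hcard
      simp only [Finset.prod_singleton] at hprod
      have hh := hS q (by simp)
      subst hprod
      exact leaf_sound (by simpa using h) hh.1 (hge q (by simp)) hP hN hL hh.2.1
    · have hb : Nat.beq k 1 = false := by
        rw [Bool.eq_false_iff]; intro h; exact hk1 (Nat.eq_of_beq_eq_true h)
      rw [hb] at h
      simp only [cond_false, Bool.or_eq_true, Bool.and_eq_true, Nat.ble_eq] at h
      rcases h with h | ⟨h1, h2⟩
      · have : p ^ k ≤ ∏ q ∈ S, q := by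
          rw [← hcard]; exact Finset.pow_card_le_prod S _ p hge
        have := Nat.mul_le_mul_left P this
        omega
      · by_cases hp : p ∈ S
        · have hpp := hS p hp
          have hprod' : P * p * ∏ q ∈ S.erase p, q = N := by
            rw [mul_assoc, Finset.mul_prod_erase S (fun q => q) hp, hprod]
          have hNpos : 0 < N := by
            rw [← hprod]
            exact Nat.mul_pos hP (Finset.prod_pos fun q hq => (hS q hq).1.pos)
          rcases h1 with h1 | h1
          · have hg : Nat.gcd (p - 1) P = 1 := by
              have d1 : Nat.gcd (p - 1) P ∣ N - 1 := (Nat.gcd_dvd_left _ _).trans hpp.2.1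
              have d2 : Nat.gcd (p - 1) P ∣ N :=
                (Nat.gcd_dvd_right _ _).trans (Dvd.intro _ hprod)
              have d3 := (Nat.dvd_sub d2 d1)
              rw [Nat.sub_sub_self hNpos] at d3
              exact Nat.dvd_one.1 d3
            rw [hg] at h1; simp at h1
          · refine ih (k - 1) (P * p) _ (S.erase p) h1 hsort.2 hlt' ?_ ?_ (by omega)
              (Nat.mul_pos hP hpp.1.pos) hprod' (Nat.lcm_dvd hL hpp.2.1)
            · intro q hq
              obtain ⟨hne, hq⟩ := Finset.mem_erase.1 hq
              have := hS q hq
              refine ⟨this.1, this.2.1, this.2.2.imp_left fun h => ?_⟩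
              exact (List.mem_cons.1 h).resolve_left hne
            · rw [Finset.card_erase_of_mem hp, hcard]
        · refine ih k P L S h2 hsort.2 hlt' ?_ hcard hk hP hprod hL
          intro q hq
          have := hS q hq
          refine ⟨this.1, this.2.1, this.2.2.imp_left fun h => ?_⟩
          exact (List.mem_cons.1 h).resolve_left (by rintro rfl; exact hp hq)

theorem units_pow {N : ℕ} (h : IsCarmichael N) {d : ℕ} (hd : d ∣ N) (v : (ZMod d)ˣ) :
    v ^ (N - 1) = 1 := by
  have : NeZero N := ⟨by have := h.1; omega⟩
  obtain ⟨u, rfl⟩ := ZMod.unitsMap_surjective hd v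
  have hu : u ^ (N - 1) = 1 := by
    have h1 := h.2.2 (u : ZMod N).val (ZMod.val_coe_unit_coprime u)
    have h2 := (ZMod.natCast_eq_natCast_iff _ _ _).2 h1
    ext
    simpa using h2
  rw [← map_pow, hu, map_one]

theorem sub_one_dvd {N : ℕ} (h : IsCarmichael N) {p : ℕ} (hp : p.Prime) (hd : p ∣ N) :
    p - 1 ∣ N - 1 := by
  have : Fact p.Prime := ⟨hp⟩
  obtain ⟨g, hg⟩ := IsCyclic.exists_generator (α := (ZMod p)ˣ)
  have h1 := orderOf_dvd_of_pow_eq_one (units_pow h hd g)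
  rwa [orderOf_eq_card_of_forall_mem_zpowers hg, Nat.card_eq_fintype_card,
    ZMod.card_units] at h1

theorem sqfree {N : ℕ} (h : IsCarmichael N) : Squarefree N := by
  rw [Nat.squarefree_iff_prime_squarefree]
  intro p hp hd
  have : Fact p.Prime := ⟨hp⟩
  have : NeZero (p * p) := ⟨Nat.mul_ne_zero hp.ne_zero hp.ne_zero⟩
  have hc : p ∣ Fintype.card (ZMod (p * p))ˣ := by
    rw [ZMod.card_units_eq_totient, Nat.totient_mul_of_prime_of_dvd hp dvd_rfl]
    exact Dvd.intro _ rfl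
  obtain ⟨g, hg⟩ := exists_prime_orderOf_dvd_card p hc
  have h1 := orderOf_dvd_of_pow_eq_one (units_pow h hd g)
  rw [hg] at h1
  have h2 : p ∣ N := (Dvd.intro _ rfl).trans hd
  have h3 := Nat.dvd_sub h2 h1
  rw [Nat.sub_sub_self h.1.le] at h3
  exact hp.one_lt.ne' (Nat.dvd_one.1 h3)

theorem lower {N : ℕ} (h : IsCarmichael N) (hc : N.primeFactors.card = 10) : B ≤ N := by
  by_contra hlt
  have hlt : N < B := by omega
  have hodd : ¬ 2 ∣ N := by
    intro h2
    obtain ⟨p, hp, hp2⟩ := Finset.exists_mem_ne (s := N.primeFactors) (by omega) 2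
    have hpp := Nat.prime_of_mem_primeFactors hp
    have h3 := sub_one_dvd h hpp (Nat.dvd_of_mem_primeFactors hp)
    have h4 : 2 ∣ p - 1 := by
      have := hpp.eq_two_or_odd
      omega
    have h5 := h4.trans h3
    have := h.1
    omega
  refine go_sound N hlt primes 10 1 2 N.primeFactors go_primes primes_sorted
    (by decide +kernel) ?_ hc (by norm_num) (by norm_num) ?_ ?_
  · intro q hq
    have hqp := Nat.prime_of_mem_primeFactors hq
    have hqd := Nat.dvd_of_mem_primeFactors hq
    refine ⟨hqp, sub_one_dvd h hqp hqd, ?_⟩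
    by_cases hq5 : q < 500
    · left
      refine primes_cover q hq5 ?_ ?_
      · have := hqp.two_le
        rcases this.lt_or_eq with h | h
        · exact h
        · subst h; exact absurd hqd hodd
      · intro d hd hdq
        refine ((Nat.dvd_prime hqp).1 hdq).resolve_left ?_
        rintro rfl
        simp at hd
    · right; omega
  · rw [one_mul, Nat.prod_primeFactors_of_squarefree (sqfree h)]
  · have := h.1
    omega

def F : Finset ℕ := {11, 13, 19, 29, 31, 37, 41, 43, 71, 127}

theorem F_prime : ∀ p ∈ F, p.Prime := by
  intro p hp
  simp only [F, Finset.mem_insert, Finset.mem_singleton] at hp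
  rcases hp with rfl | rfl | rfl | rfl | rfl | rfl | rfl | rfl | rfl | rfl <;> norm_num

theorem F_prod : ∏ p ∈ F, p = 1436697831295441 := by decide +kernel

theorem F_dvd : ∀ p ∈ F, p - 1 ∣ 1436697831295441 - 1 := by decide +kernel

theorem F_pf : Nat.primeFactors 1436697831295441 = F := by
  rw [← F_prod]; exact Nat.primeFactors_prod F_prime

theorem is_car : IsCarmichael 1436697831295441 := by
  refine ⟨by norm_num, by norm_num, ?_⟩
  intro b hb
  have hb1 : 1 ≤ b ^ (1436697831295441 - 1) := by
    refine Nat.one_le_iff_ne_zero.2 (pow_ne_zero _ ?_)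
    rintro rfl
    norm_num at hb
  generalize hm : 1436697831295441 - 1 = m at *
  refine ((Nat.modEq_iff_dvd' hb1).2 ?_).symm
  rw [← F_prod]
  refine Finset.prod_primes_dvd _ (fun p hp => (F_prime p hp).prime) ?_
  intro p hp
  have hpp := F_prime p hp
  have : Fact p.Prime := ⟨hpp⟩
  have hpd : p ∣ 1436697831295441 := by rw [← F_prod]; exact Finset.dvd_prod_of_mem _ hp
  have hbp : Nat.Coprime b p := Nat.Coprime.coprime_dvd_right hpd hb
  refine (Nat.modEq_iff_dvd' hb1).1 (Nat.ModEq.symm ?_)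
  obtain ⟨t, ht⟩ := F_dvd p hp
  rw [hm] at ht
  rw [ht, pow_mul]
  have := (Nat.ModEq.pow_totient hbp).pow t
  rwa [Nat.totient_prime hpp, one_pow] at this

end Car

theorem carmichael_smallest_with_10_prime_factors :
    IsCarmichael 1436697831295441 ∧ (Nat.primeFactors 1436697831295441).card = 10 ∧
      ∀ N : ℕ, IsCarmichael N → N.primeFactors.card = 10 → 1436697831295441 ≤ N := by
  refine ⟨Car.is_car, ?_, fun N h hc => Car.lower h hc⟩
  rw [Car.F_pf]; rfl
end

section
/- 994018226608901845 = 5 · 13 · 1733 · 12517 · 704988733 is a Carmichael number less than 10^18 having 704988733 as a prime factor, and 704988733 is the largest prime factor of any Carmichael number less than 10^18: every prime p dividing a Carmichael number N < 10^18 satisfies p ≤ 704988733. -/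
namespace CarmAux

/-- forced application -/
noncomputable def force (n : ℕ) (f : ℕ → Bool) : Bool :=
  @Nat.rec (fun _ => Bool) (f 0) (fun m _ => f (Nat.succ m)) n

noncomputable def imp (a b : Bool) : Bool := @Bool.rec (fun _ => Bool) true b a

noncomputable def lin (n : ℕ) (f : ℕ → Bool) : Bool :=
  @Nat.rec (fun _ => Bool) true (fun i ih => @Bool.rec (fun _ => Bool) false ih (f i)) n

noncomputable def all (n : ℕ) (f : ℕ → Bool) : Bool :=
  lin (Nat.succ (Nat.div n 256)) (fun a => force (Nat.mul 256 a) (fun a' =>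
    lin (Nat.sub 256 (Nat.sub 256 (Nat.sub n a'))) (fun b => force (Nat.add a' b) f)))

noncomputable def loop (x0 x1 : ℕ) (f : ℕ → Bool) : Bool :=
  force (Nat.div x0 2) (fun k0 => lin (Nat.sub (Nat.div (Nat.succ x1) 2) k0)
    (fun i => force (Nat.add 1 (Nat.mul 2 (Nat.add k0 i))) f))

noncomputable def pm (b N : ℕ) (k : ℕ) : ℕ → ℕ :=
  @Nat.rec (fun _ => ℕ → ℕ) (fun _ => 1)
    (fun _ ih e => Nat.mod (Nat.mul (Nat.pow (ih (Nat.div e 256)) 256) (Nat.pow b (Nat.mod e 256))) N) k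

noncomputable def fer (b N : ℕ) : Bool :=
  @Bool.rec (fun _ => Bool) false
    (@Bool.rec (fun _ => Bool) true false (Nat.beq (pm b N 8 (Nat.sub N 1)) 1)) (Nat.beq (Nat.gcd b N) 1)

noncomputable def rej (M : ℕ) : Bool :=
  force (Nat.div (Nat.mul M (Nat.succ M)) 2) (fun N =>
    @Bool.rec (fun _ => Bool) (fer 3 N) true (fer 2 N))

noncomputable def fA (d : ℕ) : Bool :=
  force (Nat.mul (Nat.sub d 1) (Nat.add d 2)) (fun t =>
    loop (Nat.succ (Nat.div (Nat.sub t 1) (Nat.sub (Nat.div 1414213562 d) 1)))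
      (Nat.div t (Nat.div 1409977466 d))
      (fun c => imp (Nat.beq (Nat.mod t c) 0) (rej (Nat.mul d (Nat.succ (Nat.div t c))))))

noncomputable def checkA : Bool :=
  all 12000 (fun i => force (Nat.add 1 (Nat.mul 2 i)) (fun d => imp (Nat.ble 1121 d) (fA d)))

noncomputable def fB1 (u v q : ℕ) : Bool :=
  imp (Nat.ble 500 q)
      (@Bool.rec (fun _ => Bool)
        (loop (Nat.succ (Nat.div (Nat.add (Nat.div 1409977466 q) 2) v))
          (Nat.div (Nat.add (Nat.div 1414213562 q) 2) v)
          (fun y => force (Nat.mul v y) (fun w =>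
            imp (Nat.beq (Nat.mod (Nat.sub w 3) (Nat.mul 2 u)) u) (rej (Nat.mul (Nat.sub w 2) q)))))
        (loop (Nat.succ (Nat.div (Nat.sub (Nat.div 1409977466 q) 1) u))
          (Nat.div (Nat.sub (Nat.div 1414213562 q) 1) u)
          (fun x => force (Nat.add 1 (Nat.mul u x)) (fun d =>
            imp (Nat.beq (Nat.mod (Nat.add d 2) v) 0) (rej (Nat.mul d q)))))
        (Nat.ble v u))

noncomputable def fB (v i : ℕ) : Bool :=
  force (Nat.add 1 (Nat.mul (Nat.mul 2 i) v)) (fun q =>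
    imp (Nat.beq (Nat.gcd q 111546435) 1) (force (Nat.mul 2 i) (fun u => fB1 u v q)))

noncomputable def checkB : Bool :=
  all 14732 (fun a => force (Nat.add 1 (Nat.mul 2 a)) (fun v =>
    all (Nat.add 1 (Nat.div (Nat.div 58924 v) 2)) (fB v)))

noncomputable def PP : ℕ := 62423262560583236445063884922828353479917350883776658339787671187864303340718122976851763739386728349367658265960803748319242442708370014514271302946930727872656968737135830828274115079532598206619134320445

noncomputable def fC (q : ℕ) : Bool :=
  imp (Nat.beq (Nat.gcd q 111546435) 1) (imp (Nat.ble 29 q)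
    (force (Nat.add 1 (Nat.mul (Nat.div (Nat.div 1409977466 q) 2) 2)) (fun ds =>
      force (Nat.sub q 1) (fun e => force (Nat.mul 2 e) (fun e2 =>
      all e (fun i => force (Nat.add ds (Nat.mul 2 i)) (fun d0 =>
        imp (Nat.beq (Nat.mod (Nat.mul (Nat.sub d0 1) (Nat.add d0 2)) e2) e)
          (all (Nat.succ (Nat.div (Nat.sub (Nat.div 1414213562 q) d0) e2)) (fun j =>
            force (Nat.mul (Nat.add d0 (Nat.mul e2 j)) q) (fun M =>
              imp (Nat.beq (Nat.mod PP M) 0) (rej M)))))))))))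

noncomputable def checkC : Bool :=
  all 250 (fun i => force (Nat.add 1 (Nat.mul 2 i)) fC)


theorem ndiv (a b : ℕ) : Nat.div a b = a / b := rfl

theorem force_eq (n : ℕ) (f : ℕ → Bool) : force n f = f n := by
  cases n <;> rfl

theorem imp_true {a b : Bool} (h : imp a b = true) (ha : a = true) : b = true := by
  subst ha; exact h

theorem lin_true (n : ℕ) (f : ℕ → Bool) (h : lin n f = true) : ∀ i < n, f i = true := by
  induction n with
  | zero => intro i hi; omega
  | succ n ih =>
    have h' : @Bool.rec (fun _ => Bool) false (lin n f) (f n) = true := h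
    intro i hi
    cases hf : f n with
    | false => rw [hf] at h'; exact absurd h' (by simp)
    | true =>
      rw [hf] at h'
      rcases Nat.lt_succ_iff_lt_or_eq.mp hi with h1 | h1
      · exact ih h' i h1
      · rw [h1]; exact hf

theorem all_true (n : ℕ) (f : ℕ → Bool) (h : all n f = true) : ∀ i < n, f i = true := by
  intro i hi
  have h1 := lin_true _ _ h (i / 256) (Nat.lt_succ_of_le (Nat.div_le_div_right hi.le))
  simp only [force_eq] at h1
  have h2 := lin_true _ _ h1 (i % 256) (by
    simp only [Nat.sub_eq, Nat.mul_eq]; omega)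
  simp only [Nat.mul_eq, Nat.add_eq] at h2
  rwa [Nat.div_add_mod] at h2

theorem loop_true (x0 x1 : ℕ) (f : ℕ → Bool) (h : loop x0 x1 f = true) (x : ℕ) (hx : x % 2 = 1)
    (h0 : x0 ≤ x) (h1 : x ≤ x1) : f x = true := by
  unfold loop at h
  simp only [force_eq] at h
  have h2 := lin_true _ _ h (x / 2 - x0 / 2) (by
    simp only [Nat.sub_eq, ndiv, Nat.succ_eq_add_one]; omega)
  simp only [Nat.mul_eq, Nat.add_eq, ndiv] at h2
  convert h2 using 2
  omega

theorem pm_spec (b N k : ℕ) : ∀ e, e < 256 ^ k → pm b N k e ≡ b ^ e [MOD N] := by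
  induction k with
  | zero =>
    intro e he
    have : e = 0 := by simpa using he
    subst this
    exact Nat.ModEq.refl _
  | succ k ih =>
    intro e he
    have h1 := ih (e / 256) (by rw [Nat.div_lt_iff_lt_mul (by norm_num)]; rwa [pow_succ] at he)
    change ((pm b N k (e / 256)) ^ 256 * b ^ (e % 256)) % N ≡ _ [MOD N]
    refine (Nat.mod_modEq _ _).trans ?_
    refine ((h1.pow 256).mul_right _).trans ?_
    rw [← pow_mul, ← pow_add, Nat.div_add_mod']

theorem fer_spec (b N : ℕ) (hN1 : 1 < N) (hN : N < 10 ^ 18)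
    (hC : ∀ b : ℕ, Nat.Coprime b N → b ^ (N - 1) ≡ 1 [MOD N]) : fer b N = false := by
  unfold fer
  cases hg : Nat.beq (Nat.gcd b N) 1 with
  | false => rfl
  | true =>
    have hg' : Nat.Coprime b N := Nat.eq_of_beq_eq_true hg
    have h1 := pm_spec b N 8 (N - 1) (by norm_num; omega)
    have h2 := h1.trans (hC b hg')
    have h3 : pm b N 8 (N - 1) < N := Nat.mod_lt _ (by omega)
    have h4 : pm b N 8 (N - 1) = 1 := Nat.ModEq.eq_of_lt_of_lt h2 h3 hN1
    have h5 : Nat.beq (pm b N 8 (Nat.sub N 1)) 1 = true := by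
      rw [Nat.sub_eq, h4]; rfl
    rw [h5]

theorem rej_spec (M N : ℕ) (hMN : M * (M + 1) / 2 = N) (hN1 : 1 < N) (hN : N < 10 ^ 18)
    (hC : ∀ b : ℕ, Nat.Coprime b N → b ^ (N - 1) ≡ 1 [MOD N]) : rej M = false := by
  unfold rej
  rw [force_eq]
  have : Nat.div (Nat.mul M (Nat.succ M)) 2 = N := hMN
  rw [this, fer_spec 2 N hN1 hN hC, fer_spec 3 N hN1 hN hC]

theorem sound_A (hA : checkA = true) (d q c : ℕ) (hd : d % 2 = 1) (hd1 : 1121 ≤ d) (hd2 : d < 24000)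
    (h0 : 1409977467 ≤ d * q) (h1 : d * q ≤ 1414213562) (hc : c % 2 = 1)
    (ht : c * (q - 1) = (d - 1) * (d + 2)) : rej (d * q) = true := by
  unfold checkA at hA
  have h := all_true _ _ hA (d / 2) (by omega)
  simp only [force_eq, Nat.add_eq, Nat.mul_eq] at h
  have e : 1 + 2 * (d / 2) = d := by omega
  rw [e] at h
  have h := imp_true h (Nat.ble_eq.mpr hd1)
  unfold fA at h
  simp only [force_eq, Nat.add_eq, Nat.mul_eq, Nat.sub_eq, ndiv, Nat.succ_eq_add_one] at h
  rw [← ht] at h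
  have hq1 : 1409977466 / d ≤ q - 1 := by
    have : 1409977466 / d < q := Nat.div_lt_of_lt_mul (by omega)
    omega
  have hq2 : q ≤ 1414213562 / d := (Nat.le_div_iff_mul_le (by omega)).mpr (by linarith [mul_comm d q])
  have hqpos : 58000 ≤ 1409977466 / d := (Nat.le_div_iff_mul_le (by omega)).mpr (by omega)
  have hcq : 0 < c * (q - 1) := Nat.mul_pos (by omega) (by omega)
  have h := loop_true _ _ _ h c hc (by
    have hh : c * (q - 1) ≤ (1414213562 / d - 1) * c := by
      rw [mul_comm]; exact Nat.mul_le_mul_right _ (by omega)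
    have := Nat.div_lt_of_lt_mul (lt_of_lt_of_le (Nat.sub_lt hcq one_pos) hh)
    omega) ((Nat.le_div_iff_mul_le (by omega)).mpr (Nat.mul_le_mul_left _ hq1))
  have h := imp_true h (by
    rw [Nat.beq_eq]; exact Nat.mul_mod_right _ _)
  rw [Nat.mul_div_cancel_left _ (by omega)] at h
  convert h using 3
  omega

theorem sound_B (hB : checkB = true) (u v x y q : ℕ) (hq : q = u * v + 1) (hu : u % 2 = 0)
    (hv : v % 2 = 1) (hx : x % 2 = 1) (hy : y % 2 = 1) (hxy : u * x + 3 = v * y)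
    (hqG : Nat.gcd q 111546435 = 1) (hq5 : 500 ≤ q) (hqQ : q ≤ 58925)
    (h0 : 1409977467 ≤ (u * x + 1) * q) (h1 : (u * x + 1) * q ≤ 1414213562) :
    rej ((u * x + 1) * q) = true := by
  have hu0 : 0 < u := by
    rcases Nat.eq_zero_or_pos u with h | h
    · subst h; omega
    · exact h
  unfold checkB at hB
  have hvu : v * 2 ≤ u * v := by
    rw [mul_comm]; exact Nat.mul_le_mul_right _ (by omega)
  have h := all_true _ _ hB (v / 2) (by omega)
  simp only [force_eq, Nat.add_eq, Nat.mul_eq, ndiv] at h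
  have e : 1 + 2 * (v / 2) = v := by omega
  rw [e] at h
  have hub : u ≤ 58924 / v := (Nat.le_div_iff_mul_le (by omega)).mpr (by omega)
  have h := all_true _ _ h (u / 2) (by omega)
  unfold fB at h
  simp only [force_eq, Nat.add_eq, Nat.mul_eq] at h
  have e : 2 * (u / 2) = u := by omega
  rw [e, show 1 + u * v = q by omega] at h
  have h := imp_true h (by rw [hqG]; rfl)
  unfold fB1 at h
  have h := imp_true h (Nat.ble_eq.mpr hq5)
  simp only [force_eq, Nat.add_eq, Nat.mul_eq, Nat.sub_eq, ndiv, Nat.succ_eq_add_one] at h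
  have hd1 : 1409977466 / q < u * x + 1 := Nat.div_lt_of_lt_mul (by rw [mul_comm]; omega)
  have hd2 : u * x + 1 ≤ 1414213562 / q := (Nat.le_div_iff_mul_le (by omega)).mpr h1
  have hdb : 1 ≤ 1409977466 / q := (Nat.le_div_iff_mul_le (by omega)).mpr (by omega)
  cases hb : Nat.ble v u with
  | true =>
    rw [hb] at h
    have h := loop_true _ _ _ h x hx (by
      have := Nat.div_lt_of_lt_mul (show 1409977466 / q - 1 < u * x by omega)
      omega) ((Nat.le_div_iff_mul_le (by omega)).mpr (by rw [mul_comm]; omega))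
    rw [add_comm 1 (u * x)] at h
    refine imp_true h ?_
    rw [Nat.beq_eq]
    change (u * x + 1 + 2) % v = 0
    rw [show u * x + 1 + 2 = v * y by omega]
    exact Nat.mul_mod_right _ _
  | false =>
    rw [hb] at h
    have h := loop_true _ _ _ h y hy (by
      have := Nat.div_lt_of_lt_mul (show 1409977466 / q + 2 < v * y by omega)
      omega) ((Nat.le_div_iff_mul_le (by omega)).mpr (by rw [mul_comm]; omega))
    have h := imp_true h (by
      rw [Nat.beq_eq]
      change (v * y - 3) % (2 * u) = u
      rw [← hxy, Nat.add_sub_cancel]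
      obtain ⟨k, hk⟩ : ∃ k, x = 2 * k + 1 := ⟨x / 2, by omega⟩
      rw [hk, show u * (2 * k + 1) = u + 2 * u * k by ring, Nat.add_mul_mod_self_left]
      exact Nat.mod_eq_of_lt (by omega))
    rw [← hxy] at h
    exact h

theorem sound_C (hCC : checkC = true) (d q c : ℕ) (hd : d % 2 = 1) (hq2 : q % 2 = 1)
    (hqG : Nat.gcd q 111546435 = 1) (hq29 : 29 ≤ q) (hq5 : q < 500) (hP : d * q ∣ PP)
    (h0 : 1409977467 ≤ d * q) (h1 : d * q ≤ 1414213562) (hc : c % 2 = 1)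
    (ht : c * (q - 1) = (d - 1) * (d + 2)) : rej (d * q) = true := by
  unfold checkC at hCC
  have h := all_true _ _ hCC (q / 2) (by omega)
  simp only [force_eq, Nat.add_eq, Nat.mul_eq] at h
  have e : 1 + 2 * (q / 2) = q := by omega
  rw [e] at h
  unfold fC at h
  have h := imp_true h (by rw [hqG]; rfl)
  have h := imp_true h (Nat.ble_eq.mpr hq29)
  simp only [force_eq, Nat.add_eq, Nat.mul_eq, Nat.sub_eq, ndiv, Nat.succ_eq_add_one] at h
  have hd1 : 1409977466 / q < d := Nat.div_lt_of_lt_mul (by rw [mul_comm]; omega)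
  have hd2 : d ≤ 1414213562 / q := (Nat.le_div_iff_mul_le (by omega)).mpr h1
  generalize hds : 1 + 1409977466 / q / 2 * 2 = ds at h
  have hds1 : ds % 2 = 1 := by omega
  have hds2 : ds ≤ d := by omega
  have hds3 : 1 ≤ ds := by omega
  obtain ⟨w, hw⟩ : ∃ w, d = ds + 2 * w := ⟨(d - ds) / 2, by omega⟩
  have h := all_true _ _ h (w % (q - 1)) (Nat.mod_lt _ (by omega))
  have hdw : d = ds + 2 * (w % (q - 1)) + 2 * (q - 1) * (w / (q - 1)) := by
    have := Nat.mod_add_div w (q - 1)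
    have h2 : 2 * w = 2 * (w % (q - 1)) + 2 * (q - 1) * (w / (q - 1)) := by
      rw [mul_assoc, ← mul_add, this]
    omega
  generalize hd0 : ds + 2 * (w % (q - 1)) = d0 at h hdw
  generalize w / (q - 1) = j at h hdw
  have h := imp_true h (by
    rw [Nat.beq_eq]
    change ((d0 - 1) * (d0 + 2)) % (2 * (q - 1)) = q - 1
    have h3 : (d - 1) * (d + 2) ≡ (d0 - 1) * (d0 + 2) [MOD 2 * (q - 1)] := by
      refine Nat.ModEq.mul ?_ ?_
      · rw [hdw, show d0 + 2 * (q - 1) * j - 1 = d0 - 1 + 2 * (q - 1) * j by omega]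
        simp [Nat.ModEq]
      · rw [hdw, show d0 + 2 * (q - 1) * j + 2 = d0 + 2 + 2 * (q - 1) * j by omega]
        simp [Nat.ModEq]
    rw [← h3, ← ht]
    obtain ⟨k, hk⟩ : ∃ k, c = 2 * k + 1 := ⟨c / 2, by omega⟩
    rw [hk, show (2 * k + 1) * (q - 1) = (q - 1) + 2 * (q - 1) * k by ring, Nat.add_mul_mod_self_left]
    exact Nat.mod_eq_of_lt (by omega))
  have h := all_true _ _ h j (by
    refine Nat.lt_succ_of_le ((Nat.le_div_iff_mul_le (by omega)).mpr ?_)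
    rw [mul_comm]; omega)
  rw [← hdw] at h
  refine imp_true h ?_
  rw [Nat.beq_eq]
  exact Nat.mod_eq_zero_of_dvd hP


theorem sq_zero_pow {R : Type*} [CommRing R] (y : R) (hy : y * y = 0) (n : ℕ) :
    (1 + y) ^ n = 1 + n * y := by
  induction n with
  | zero => simp
  | succ n ih =>
    rw [pow_succ, ih]; push_cast
    linear_combination (n : R) * hy

theorem carm_sqfree {N : ℕ} (h1 : 1 < N)
    (hC : ∀ b : ℕ, Nat.Coprime b N → b ^ (N - 1) ≡ 1 [MOD N]) : Squarefree N := by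
  rw [Nat.squarefree_iff_prime_squarefree]
  rintro q hq ⟨m, hm⟩
  set y : ZMod N := ((q * m : ℕ) : ZMod N) with hy
  have hyy : y * y = 0 := by
    rw [hy, ← Nat.cast_mul, ZMod.natCast_eq_zero_iff]
    exact ⟨m, by rw [hm]; ring⟩
  have hcop : Nat.Coprime (1 + q * m) N := by
    rw [← ZMod.isUnit_iff_coprime]
    push_cast
    refine IsUnit.of_mul_eq_one (1 - y) ?_
    rw [hy] at hyy ⊢
    push_cast at hyy ⊢
    linear_combination -hyy
  have h2 := (ZMod.natCast_eq_natCast_iff _ _ _).mpr (hC _ hcop)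
  have h3 : (1 + y) ^ (N - 1) = 1 := by
    rw [hy]; push_cast at h2 ⊢; exact h2
  have h4 : (1 + y) ^ N = 1 + y := by
    rw [← pow_sub_one_mul (show N ≠ 0 by omega), h3, one_mul]
  rw [sq_zero_pow y hyy] at h4
  simp only [CharP.cast_eq_zero, zero_mul, add_zero] at h4
  have h5 : y = 0 := by linear_combination -h4
  rw [hy, ZMod.natCast_eq_zero_iff] at h5
  have hm0 : 0 < m := by
    rcases Nat.eq_zero_or_pos m with h | h
    · subst h; omega
    · exact h
  have h6 := Nat.le_of_dvd (Nat.mul_pos hq.pos hm0) h5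
  have : 2 * (q * m) ≤ N := by
    rw [hm, mul_assoc]; exact Nat.mul_le_mul_right _ hq.two_le
  have := Nat.mul_pos hq.pos hm0
  omega

theorem carm_dvd {N q : ℕ} (h1 : 1 < N)
    (hC : ∀ b : ℕ, Nat.Coprime b N → b ^ (N - 1) ≡ 1 [MOD N]) (hq : q.Prime) (hqN : q ∣ N) :
    q - 1 ∣ N - 1 := by
  have : Fact q.Prime := ⟨hq⟩
  have : NeZero N := ⟨by omega⟩
  obtain ⟨g, hg⟩ := IsCyclic.exists_generator (α := (ZMod q)ˣ)
  obtain ⟨U, hU⟩ := ZMod.unitsMap_surjective hqN g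
  have h2 : U ^ (N - 1) = 1 := by
    have h3 := (ZMod.natCast_eq_natCast_iff _ _ _).mpr (hC _ (ZMod.val_coe_unit_coprime U))
    push_cast at h3
    rw [ZMod.natCast_zmod_val] at h3
    ext
    push_cast
    exact h3
  have h4 : g ^ (N - 1) = 1 := by rw [← hU, ← map_pow, h2, map_one]
  have h5 := orderOf_dvd_of_pow_eq_one h4
  rwa [orderOf_eq_card_of_forall_mem_zpowers hg, Nat.card_eq_fintype_card, ZMod.card_units] at h5

theorem dvd_of_sqfree {M P : ℕ} (hsq : Squarefree M) (h : ∀ q, q.Prime → q ∣ M → q ∣ P) : M ∣ P := by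
  rw [← Nat.prod_primeFactors_of_squarefree hsq]
  refine Finset.prod_primes_dvd _ (fun q hq => (Nat.prime_of_mem_primeFactors hq).prime) ?_
  intro q hq
  exact h q (Nat.prime_of_mem_primeFactors hq) (Nat.dvd_of_mem_primeFactors hq)

theorem G_small : ∀ r < 29, r.Prime → r ≠ 2 → r ∣ 111546435 := by
  decide +kernel

theorem G_primes : Nat.gcd 111546435 111546435 = 111546435 ∧
    111546435 = 3 * 5 * 7 * 11 * 13 * 17 * 19 * 23 := by norm_num

theorem gcd_G {q : ℕ} (hq : q.Prime) (h : 29 ≤ q) : Nat.gcd q 111546435 = 1 := by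
  refine (Nat.Prime.coprime_iff_not_dvd hq).mpr ?_
  intro hd
  rw [G_primes.2] at hd
  simp only [hq.dvd_mul] at hd
  have key : ∀ n, 0 < n → n < 29 → ¬ q ∣ n := fun n hn hn2 hdn => by
    have := Nat.le_of_dvd hn hdn; omega
  rcases hd with ((((((h|h)|h)|h)|h)|h)|h)|h <;> exact key _ (by norm_num) (by norm_num) h

theorem PP_aux : ∀ i < 250, Nat.gcd (2 * i + 1) 111546435 = 1 → PP % (2 * i + 1) = 0 := by
  decide +kernel

theorem PP_small (r : ℕ) (hr : r < 500) (hp : r.Prime) (h2 : r ≠ 2) : r ∣ PP := by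
  by_cases h : r < 29
  · exact (G_small r h hp h2).trans (Nat.dvd_of_mod_eq_zero (by decide +kernel))
  · have ho : r % 2 = 1 := hp.eq_two_or_odd.resolve_left h2
    have e : 2 * (r / 2) + 1 = r := by omega
    have := PP_aux (r / 2) (by omega)
    rw [e] at this
    exact Nat.dvd_of_mod_eq_zero (this (gcd_G hp (by omega)))

theorem main_false (hA : checkA = true) (hB : checkB = true) (hCC : checkC = true) (M : ℕ)
    (hM : M % 2 = 1) (h0 : 1409977467 ≤ M) (h1 : M ≤ 1414213562) (hsq : Squarefree M)
    (hrej : rej M = false)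
    (hkey : ∀ q d, q.Prime → M = d * q → ∃ c, c % 2 = 1 ∧ c * (q - 1) = (d - 1) * (d + 2)) :
    False := by
  obtain ⟨q, hqm, hmax⟩ := Finset.exists_max_image M.primeFactors id
    (Nat.nonempty_primeFactors.mpr (by omega))
  have hq := Nat.prime_of_mem_primeFactors hqm
  obtain ⟨d, hd⟩ := Nat.dvd_of_mem_primeFactors hqm
  rw [mul_comm] at hd
  have hmax' : ∀ r, r.Prime → r ∣ M → r ≤ q := fun r hr hrM =>
    hmax r (Nat.mem_primeFactors.mpr ⟨hr, hrM, by omega⟩)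
  have hne2 : ∀ r, r ∣ M → r ≠ 2 := by rintro r hr rfl; omega
  obtain ⟨c, hc, ht⟩ := hkey q d hq hd
  have hodd : Odd (d * q) := Nat.odd_iff.mpr (by rw [← hd]; exact hM)
  have hd2 : d % 2 = 1 := Nat.odd_iff.mp (Nat.odd_mul.mp hodd).1
  have hq2 : q % 2 = 1 := Nat.odd_iff.mp (Nat.odd_mul.mp hodd).2
  have hq29 : 29 ≤ q := by
    by_contra hlt
    have := Nat.le_of_dvd (by norm_num) (dvd_of_sqfree (P := 111546435) hsq (fun r hr hrM =>
      G_small r (by have := hmax' r hr hrM; omega) hr (hne2 r hrM)))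
    omega
  have hG := gcd_G hq hq29
  rw [hd] at h0 h1 hrej
  have contra : rej (d * q) ≠ true := by rw [hrej]; simp
  apply contra
  by_cases hq5 : q < 500
  · refine sound_C hCC d q c hd2 hq2 hG hq29 hq5 ?_ h0 h1 hc ht
    rw [← hd]
    exact dvd_of_sqfree hsq (fun r hr hrM =>
      PP_small r (by have := hmax' r hr hrM; omega) hr (hne2 r hrM))
  by_cases hdD : d < 24000
  · refine sound_A hA d q c hd2 ?_ hdD h0 h1 hc ht
    by_contra hlt
    have h3 : (d - 1) * (d + 2) ≤ 1119 * 1122 := Nat.mul_le_mul (by omega) (by omega)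
    have h4 : q - 1 ≤ c * (q - 1) := Nat.le_mul_of_pos_left _ (by omega)
    have h5 : d * q ≤ 1120 * (1119 * 1122 + 1) := Nat.mul_le_mul (by omega) (by omega)
    omega
  · have hqQ : q ≤ 58925 := by
      by_contra hlt
      have : 24000 * 58926 ≤ d * q := Nat.mul_le_mul (by omega) (by omega)
      omega
    obtain ⟨u, v, ⟨x, hx⟩, ⟨y, hy⟩, huv⟩ := exists_dvd_and_dvd_of_dvd_mul (Dvd.intro_left c ht)
    have hvy : Odd (v * y) := Nat.odd_iff.mpr (by omega)
    have hv := Nat.odd_iff.mp (Nat.odd_mul.mp hvy).1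
    have hy2 := Nat.odd_iff.mp (Nat.odd_mul.mp hvy).2
    have hcxy : c = x * y := by
      have h3 : c * (q - 1) = (x * y) * (q - 1) := by
        rw [ht, hx, hy, huv]; ring
      exact Nat.eq_of_mul_eq_mul_right (by omega) h3
    have hxy : Odd (x * y) := Nat.odd_iff.mpr (by omega)
    have hx2 := Nat.odd_iff.mp (Nat.odd_mul.mp hxy).1
    have hu : u % 2 = 0 := by
      by_contra hu
      have : Odd (u * v) := Nat.odd_mul.mpr ⟨Nat.odd_iff.mpr (by omega), Nat.odd_iff.mpr hv⟩
      have := Nat.odd_iff.mp this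
      omega
    have hdx : d = u * x + 1 := by omega
    rw [hdx] at h0 h1 ⊢
    exact sound_B hB u v x y q (by omega) hu hv hx2 hy2 (by omega) hG (by omega) hqQ h0 h1

theorem key_fact (M N p q d : ℕ) (hMN : N = p * M) (hMp : M = 2 * p - 1) (hp : 1 < p) (hq : q.Prime)
    (hd : M = d * q) (hdvd : q - 1 ∣ N - 1) :
    ∃ c, c % 2 = 1 ∧ c * (q - 1) = (d - 1) * (d + 2) := by
  have hodd : Odd (d * q) := Nat.odd_iff.mpr (by omega)
  obtain ⟨⟨a, ha⟩, ⟨b, hb⟩⟩ := Nat.odd_mul.mp hodd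
  have hb0 : 0 < b := by
    rcases Nat.eq_zero_or_pos b with h | h
    · subst h; simp at hb; exact absurd hq (by rw [hb]; exact Nat.not_prime_one)
    · exact h
  obtain ⟨k, hk⟩ := hdvd
  have hN0 : 0 < N := by rw [hMN]; exact Nat.mul_pos (by omega) (by omega)
  have e1 : ((N : ℤ)) = (q - 1) * k + 1 := by
    have : N = (q - 1) * k + 1 := by omega
    rw [this, hb]; push_cast; simp
  have e2 : (2 : ℤ) * p = d * q + 1 := by
    have : 2 * p = d * q + 1 := by omega
    exact_mod_cast this
  have e3 : (N : ℤ) = p * (d * q) := by rw [hMN, hd]; push_cast; ring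
  have hq' : (q : ℤ) = 2 * b + 1 := by exact_mod_cast hb
  have hd' : (d : ℤ) = 2 * a + 1 := by exact_mod_cast ha
  set C : ℤ := 2 * k - 2 * d ^ 2 - d ^ 2 * (q - 1) - d with hCdef
  have e4 : C * (q - 1) = (d - 1) * (d + 2) := by
    rw [hCdef]
    linear_combination (-2) * e1 + 2 * e3 + (d * q : ℤ) * e2
  have hCpos : 0 ≤ C := by
    by_contra hneg
    push Not at hneg
    have : C * (q - 1) < 0 := mul_neg_of_neg_of_pos hneg (by rw [hq']; omega)
    rw [e4, hd'] at this
    have h5 : (0 : ℤ) ≤ (2 * a + 1 - 1) * (2 * a + 1 + 2) :=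
      mul_nonneg (by omega) (by omega)
    omega
  lift C to ℕ using hCpos with c hc
  refine ⟨c, ?_, ?_⟩
  · have : (c : ℤ) = 2 * (k - d ^ 2 - d ^ 2 * b - a - 1) + 1 := by
      rw [hCdef, hq', hd']; ring
    omega
  · rw [hb, ha] at *
    simp only [Nat.add_sub_cancel]
    push_cast at e4
    have : ((c * (2 * b) : ℕ) : ℤ) = ((2 * a * (2 * a + 1 + 2) : ℕ) : ℤ) := by
      push_cast; linear_combination e4
    exact_mod_cast this

theorem upper (hA : checkA = true) (hB : checkB = true) (hCC : checkC = true) (N p : ℕ)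
    (hN : IsCarmichael N) (hlt : N < 10 ^ 18) (hp : p.Prime) (hpN : p ∣ N) : p ≤ 704988733 := by
  by_contra hgt
  obtain ⟨h1, hnp, hC⟩ := hN
  have hsq := carm_sqfree h1 hC
  have hdv := carm_dvd h1 hC hp hpN
  obtain ⟨m, hm⟩ := hpN
  have hm0 : 0 < m := by
    rcases Nat.eq_zero_or_pos m with h | h
    · subst h; omega
    · exact h
  have hm1 : m ≠ 1 := by rintro rfl; rw [mul_one] at hm; rw [hm] at hnp; exact hnp hp
  have hsplit : N - 1 = (p - 1) * m + (m - 1) := by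
    obtain ⟨p', rfl⟩ : ∃ p', p = p' + 1 := ⟨p - 1, by omega⟩
    have : (p' + 1) * m = p' * m + m := by ring
    rw [hm, this]; simp only [Nat.add_sub_cancel]; omega
  rw [hsplit] at hdv
  obtain ⟨k, hk⟩ := (Nat.dvd_add_right (Dvd.intro m rfl)).mp hdv
  have hk0 : k ≠ 0 := by rintro rfl; omega
  have hk1 : k ≠ 1 := by
    rintro rfl
    have : m = p := by omega
    rw [this] at hm
    have := hsq p ⟨1, by rw [hm]; ring⟩
    exact hp.one_lt.ne' (Nat.isUnit_iff.mp this)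
  have hk3 : k < 3 := by
    by_contra hk3
    have h3 : (p - 1) * 3 ≤ (p - 1) * k := Nat.mul_le_mul_left _ (by omega)
    have h4 : 704988734 * (704988733 * 3) ≤ p * m := Nat.mul_le_mul (by omega) (by omega)
    omega
  have hk2 : k = 2 := by omega
  subst hk2
  have hM : m = 2 * p - 1 := by omega
  have hpu : p ≤ 707106781 := by
    by_contra hpu
    have h4 : 707106782 * (2 * 707106782 - 1) ≤ p * m := Nat.mul_le_mul (by omega) (by omega)
    omega
  refine main_false hA hB hCC m (by omega) (by omega) (by omega)
    (hsq.squarefree_of_dvd ⟨p, by rw [hm, mul_comm]⟩) (rej_spec m N ?_ h1 hlt hC) ?_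
  · rw [show m + 1 = p * 2 by omega, ← mul_assoc, Nat.mul_div_cancel _ (by norm_num), hm, mul_comm]
  · intro q d hq hd
    exact key_fact m N p q d hm hM hp.one_lt hq hd
      (carm_dvd h1 hC hq (by rw [hm, hd]; exact ⟨p * d, by ring⟩))

noncomputable def checkP : Bool :=
  all 13276 (fun i => @Bool.rec (fun _ => Bool) true false
    (Nat.beq (Nat.mod 704988733 (Nat.add 3 (Nat.mul 2 i))) 0))

theorem checkP_true : checkP = true := by decide +kernel

theorem prime_big : Nat.Prime 704988733 := by
  rw [Nat.prime_def_le_sqrt]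
  refine ⟨by norm_num, fun m hm hms hmd => ?_⟩
  have hb : m * m ≤ 704988733 := Nat.le_sqrt.mp hms
  have hm2 : m % 2 = 1 := by
    by_contra h
    have : 2 ∣ 704988733 := (Nat.dvd_of_mod_eq_zero (by omega)).trans hmd
    omega
  have hlt : m < 26552 := by
    by_contra h
    have : 26552 * 26552 ≤ m * m := Nat.mul_le_mul (by omega) (by omega)
    omega
  have h := checkP_true
  unfold checkP at h
  have h := all_true _ _ h ((m - 3) / 2) (by omega)
  simp only [Nat.add_eq, Nat.mul_eq] at h
  rw [show 3 + 2 * ((m - 3) / 2) = m by omega] at h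
  have e : Nat.beq (Nat.mod 704988733 m) 0 = true := by
    rw [Nat.beq_eq]; exact Nat.mod_eq_zero_of_dvd hmd
  rw [e] at h
  exact absurd h (by simp)


theorem carm_ex : IsCarmichael 994018226608901845 := by
  refine ⟨by norm_num, ?_, ?_⟩
  · intro h
    have := (Nat.dvd_prime h).mp (show 5 ∣ 994018226608901845 by norm_num)
    omega
  · intro b hb
    have key : ∀ q, q.Prime → q ∣ 994018226608901845 → q - 1 ∣ 994018226608901845 - 1 →
        b ^ (994018226608901845 - 1) ≡ 1 [MOD q] := by
      intro q hq hqN hdv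
      obtain ⟨k, hk⟩ := hdv
      have hc : Nat.Coprime b q := Nat.Coprime.coprime_dvd_right hqN hb
      have h := Nat.ModEq.pow_totient hc
      rw [Nat.totient_prime hq] at h
      rw [hk, pow_mul]
      simpa using h.pow k
    have h1 := key 5 (by norm_num) (by norm_num) (by norm_num)
    have h2 := key 13 (by norm_num) (by norm_num) (by norm_num)
    have h3 := key 1733 (by norm_num) (by norm_num) (by norm_num)
    have h4 := key 12517 (by norm_num) (by norm_num) (by norm_num)
    have h5 := key 704988733 prime_big (by norm_num) (by norm_num)
    have h12 := (Nat.modEq_and_modEq_iff_modEq_mul (by norm_num)).mp ⟨h1, h2⟩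
    have h123 := (Nat.modEq_and_modEq_iff_modEq_mul (by norm_num)).mp ⟨h12, h3⟩
    have h1234 := (Nat.modEq_and_modEq_iff_modEq_mul (by norm_num)).mp ⟨h123, h4⟩
    have h12345 := (Nat.modEq_and_modEq_iff_modEq_mul (by norm_num)).mp ⟨h1234, h5⟩
    have e : 5 * 13 * 1733 * 12517 * 704988733 = 994018226608901845 := by norm_num
    rwa [e] at h12345

theorem checkA_true : checkA = true := by decide +kernel

theorem checkB_true : checkB = true := by decide +kernel

theorem checkC_true : checkC = true := by decide +kernel

end CarmAux

theorem carmichael_largest_prime_factor :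
    (994018226608901845 : ℕ) = 5 * 13 * 1733 * 12517 * 704988733 ∧
      IsCarmichael 994018226608901845 ∧ (994018226608901845 : ℕ) < 10 ^ 18 ∧
      Nat.Prime 704988733 ∧ (704988733 : ℕ) ∣ 994018226608901845 ∧
      ∀ N p : ℕ, IsCarmichael N → N < 10 ^ 18 → p.Prime → p ∣ N →
        p ≤ 704988733 :=
  ⟨by norm_num, CarmAux.carm_ex, by norm_num, CarmAux.prime_big, by norm_num,
    fun N p => CarmAux.upper CarmAux.checkA_true CarmAux.checkB_true CarmAux.checkC_true N p⟩
end
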